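/- arXiv:2101.03101 — 2 statements merged into one kernel-verified Lean document; each statement's English description precedes it below -/
import Mathlib

section
/- Shadow and Bol operators send H^# to holomorphic modular forms. Let N ≥ 1, χ a Dirichlet character mod N, k ∈ ℤ with k ≠ 1, and f ∈ H^#_k(N,χ). Then ξ_k(f) ∈ M_{2−k}(N, χ̄). Moreover, if k ≤ 0 then D^{1−k}(f) ∈ M_{2−k}(N, χ), where D = (1/(2πi)) ∂/∂τ. -/
open Complex MeasureTheory Set Filter

noncomputable section

/-- The upper half-plane, as a subset of `ℂ`. -/
def UHP : Set ℂ := {τ : ℂ | 0 < τ.im}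

/-- The weight-`k` slash operator for the matrix `(a b; c d)` (assumed of positive
determinant): `(f|_k γ)(τ) = (det γ)^(k/2) (cτ+d)^(-k) f((aτ+b)/(cτ+d))`. -/
def slash (k : ℤ) (a b c d : ℂ) (f : ℂ → ℂ) : ℂ → ℂ := fun τ =>
  (a * d - b * c) ^ ((k : ℂ) / 2) * (c * τ + d) ^ (-k) * f ((a * τ + b) / (c * τ + d))

/-- The Fricke involution `f ↦ f|_k ω(M)` with `ω(M) = (0 -1; M 0)`. -/
def fricke (k : ℤ) (M : ℕ) (f : ℂ → ℂ) : ℂ → ℂ := slash k 0 (-1) (M : ℂ) 0 f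

/-- Partial derivative in the real (`u`) direction. -/
def pdU (f : ℂ → ℂ) (τ : ℂ) : ℂ := fderiv ℝ f τ 1

/-- Partial derivative in the imaginary (`v`) direction. -/
def pdV (f : ℂ → ℂ) (τ : ℂ) : ℂ := fderiv ℝ f τ Complex.I

/-- Wirtinger derivative `∂/∂τ`. -/
def wirt (f : ℂ → ℂ) (τ : ℂ) : ℂ := (pdU f τ - Complex.I * pdV f τ) / 2

/-- Wirtinger derivative `∂/∂τ̄`. -/
def wirtBar (f : ℂ → ℂ) (τ : ℂ) : ℂ := (pdU f τ + Complex.I * pdV f τ) / 2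

/-- The weight-`k` hyperbolic Laplacian
`Δ_k = -v²(∂²/∂u² + ∂²/∂v²) + ikv(∂/∂u + i ∂/∂v)`. -/
def hypLaplacian (k : ℤ) (f : ℂ → ℂ) (τ : ℂ) : ℂ :=
  -(τ.im : ℂ) ^ 2 * (pdU (pdU f) τ + pdV (pdV f) τ)
    + Complex.I * (k : ℂ) * (τ.im : ℂ) * (pdU f τ + Complex.I * pdV f τ)

/-- Maass raising operator `R_k = 2i ∂/∂τ + k/v`. -/
def Rop (k : ℤ) (f : ℂ → ℂ) (τ : ℂ) : ℂ :=
  2 * Complex.I * wirt f τ + (k : ℂ) / (τ.im : ℂ) * f τ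

/-- Maass lowering operator `L_k = -2iv² ∂/∂τ̄`. -/
def Lop (f : ℂ → ℂ) (τ : ℂ) : ℂ := -2 * Complex.I * (τ.im : ℂ) ^ 2 * wirtBar f τ

/-- Shadow operator `ξ_k f = 2i v^k conj(∂f/∂τ̄)`. -/
def xiOp (k : ℤ) (f : ℂ → ℂ) (τ : ℂ) : ℂ :=
  2 * Complex.I * (τ.im : ℂ) ^ k * (starRingEnd ℂ) (wirtBar f τ)

/-- The operator `D = (1/(2πi)) ∂/∂τ`. -/
def Dop (f : ℂ → ℂ) : ℂ → ℂ := fun τ => wirt f τ / (2 * Real.pi * Complex.I)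

/-- Modularity: `f|_k γ = χ(d) f` for all `γ = (a b; c d) ∈ Γ₀(N)`. -/
def SlashInv (k : ℤ) (N : ℕ) (χ : DirichletCharacter ℂ N) (f : ℂ → ℂ) : Prop :=
  ∀ a b c d : ℤ, a * d - b * c = 1 → (N : ℤ) ∣ c → ∀ τ ∈ UHP,
    slash k (a : ℂ) (b : ℂ) (c : ℂ) (d : ℂ) f τ = χ (d : ZMod N) * f τ

/-- At every cusp, `f|_k γ` grows at most linear-exponentially:
`(f|_k γ)(τ) = O(e^(εv))` as `v → ∞`. -/
def ExpGrowthAtCusps (k : ℤ) (f : ℂ → ℂ) : Prop :=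
  ∀ a b c d : ℤ, a * d - b * c = 1 →
    ∃ ε > (0 : ℝ), ∃ C v₀ : ℝ, ∀ τ ∈ UHP, v₀ ≤ τ.im →
      ‖slash k (a : ℂ) (b : ℂ) (c : ℂ) (d : ℂ) f τ‖ ≤ C * Real.exp (ε * τ.im)

/-- At every cusp, `f|_k γ` has at most polynomial growth as `v → ∞`. -/
def PolyGrowthAtCusps (k : ℤ) (f : ℂ → ℂ) : Prop :=
  ∀ a b c d : ℤ, a * d - b * c = 1 →
    ∃ A C v₀ : ℝ, ∀ τ ∈ UHP, v₀ ≤ τ.im →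
      ‖slash k (a : ℂ) (b : ℂ) (c : ℂ) (d : ℂ) f τ‖ ≤ C * τ.im ^ A

/-- At every cusp, `f|_k γ` stays bounded as `v → ∞`. -/
def BoundedAtCusps (k : ℤ) (f : ℂ → ℂ) : Prop :=
  ∀ a b c d : ℤ, a * d - b * c = 1 →
    ∃ C v₀ : ℝ, ∀ τ ∈ UHP, v₀ ≤ τ.im →
      ‖slash k (a : ℂ) (b : ℂ) (c : ℂ) (d : ℂ) f τ‖ ≤ C

/-- Harmonic Maass forms of manageable growth: the space `H^!_k(N,χ)`. -/
def IsHarmonicMaassMG (k : ℤ) (N : ℕ) (χ : DirichletCharacter ℂ N) (f : ℂ → ℂ) : Prop :=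
  ContDiffOn ℝ (⊤ : ℕ∞) f UHP ∧ SlashInv k N χ f ∧ (∀ τ ∈ UHP, hypLaplacian k f τ = 0) ∧
    ExpGrowthAtCusps k f

/-- Harmonic Maass forms of polynomial growth: the space `H^#_k(N,χ)`. -/
def IsHMFPolyGrowth (k : ℤ) (N : ℕ) (χ : DirichletCharacter ℂ N) (f : ℂ → ℂ) : Prop :=
  IsHarmonicMaassMG k N χ f ∧ PolyGrowthAtCusps k f

/-- Holomorphic modular forms of weight `k`: the space `M_k(N,χ)`. -/
def IsHolomorphicModularForm (k : ℤ) (N : ℕ) (χ : DirichletCharacter ℂ N) (f : ℂ → ℂ) : Prop :=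
  DifferentiableOn ℂ f UHP ∧ SlashInv k N χ f ∧ BoundedAtCusps k f

/-- The (real) incomplete gamma function `Γ(ν, x) = ∫_x^∞ e^(-t) t^(ν-1) dt`. -/
def incGamma (ν : ℝ) (x : ℝ) : ℝ := ∫ t in Ioi x, Real.exp (-t) * t ^ (ν - 1)

/-- The series `Σ_{n≥0} c⁺(n) qⁿ + c⁻(0) v^(1-k) + Σ_{n<0} c⁻(n) Γ(1-k, -4πnv) qⁿ`,
with `cm j` standing for `c⁻(-j)`. -/
def maassSeries (k : ℤ) (cp cm : ℕ → ℂ) : ℂ → ℂ := fun τ =>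
  (∑' n : ℕ, cp n * Complex.exp (2 * Real.pi * Complex.I * n * τ))
    + cm 0 * (τ.im : ℂ) ^ (1 - k)
    + ∑' n : ℕ, cm (n + 1) * (incGamma ((1 - k : ℤ) : ℝ) (4 * Real.pi * (n + 1) * τ.im) : ℂ)
        * Complex.exp (-(2 * Real.pi * Complex.I * (n + 1) * τ))

/-- `f` is given on `ℍ` by the harmonic-Maass-type Fourier series with
holomorphic-part coefficients `cp n = c⁺(n)` and nonholomorphic-part
coefficients `cm n = c⁻(-n)`. -/
def FourierShape (k : ℤ) (cp cm : ℕ → ℂ) (f : ℂ → ℂ) : Prop :=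
  ∀ τ ∈ UHP, f τ = maassSeries k cp cm τ

/-- Coefficients bounded by `O(n^α)`. -/
def CoeffBound (α : ℝ) (c : ℕ → ℂ) : Prop :=
  ∃ C : ℝ, ∀ n : ℕ, 1 ≤ n → ‖c n‖ ≤ C * (n : ℝ) ^ α

/-- Dirichlet series `Σ_{n≥1} c(n) n^(-s)`. -/
def LSer (c : ℕ → ℂ) (s : ℂ) : ℂ := ∑' n : ℕ, c (n + 1) / ((n : ℂ) + 1) ^ s

/-- `W_ν(s) = ∫₀^∞ Γ(ν,2x) eˣ x^(s-1) dx`. -/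
def Wnu (ν : ℝ) (s : ℂ) : ℂ :=
  ∫ x in Ioi (0 : ℝ), ((incGamma ν (2 * x) * Real.exp x : ℝ) : ℂ) * (x : ℂ) ^ (s - 1)

/-- Completed `L`-function `Λ_N(f,s)` (with twisting conductor `m`; `m = 1` is
the untwisted case): `(m√N/(2π))^s [Γ(s) L⁺(s) + W_{1-k}(s) L⁻(s)]`. -/
def LambdaN (N : ℕ) (k : ℤ) (m : ℕ) (cp cm : ℕ → ℂ) (s : ℂ) : ℂ :=
  ((m * Real.sqrt N / (2 * Real.pi) : ℝ) : ℂ) ^ s *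
    (Complex.Gamma s * LSer cp s + Wnu ((1 - k : ℤ) : ℝ) s * LSer cm s)

/-- `Ξ_N(f,s) = (m√N/(2π))^s [Γ(s+1) L⁺(s) - W_{1-k}(s+1) L⁻(s)]`. -/
def XiN (N : ℕ) (k : ℤ) (m : ℕ) (cp cm : ℕ → ℂ) (s : ℂ) : ℂ :=
  ((m * Real.sqrt N / (2 * Real.pi) : ℝ) : ℂ) ^ s *
    (Complex.Gamma (s + 1) * LSer cp s - Wnu ((1 - k : ℤ) : ℝ) (s + 1) * LSer cm s)

/-- `Ω_N(f,s) = -2 Ξ_N(f,s) + k Λ_N(f,s)`. -/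
def OmegaN (N : ℕ) (k : ℤ) (m : ℕ) (cp cm : ℕ → ℂ) (s : ℂ) : ℂ :=
  -2 * XiN N k m cp cm s + (k : ℂ) * LambdaN N k m cp cm s

/-- Bounded on every vertical strip. -/
def BoundedVert (F : ℂ → ℂ) : Prop :=
  ∀ a b : ℝ, ∃ M : ℝ, ∀ s : ℂ, a ≤ s.re → s.re ≤ b → ‖F s‖ ≤ M

/-- `N^((1-k)/2)` as a complex number. -/
def Npow (N : ℕ) (k : ℤ) : ℂ := (N : ℂ) ^ ((1 - (k : ℂ)) / 2)

/-- Pole-correction terms for `Λ*`. -/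
def corrL (N : ℕ) (k : ℤ) (ι c0 d0 c0' d0' : ℂ) (s : ℂ) : ℂ :=
  c0 / s + ι * d0 / ((k : ℂ) - s) + c0' / Npow N k / (s - (k : ℂ) + 1)
    + ι * d0' / Npow N k / (1 - s)

/-- Pole-correction terms for `Ω*`. -/
def corrO (N : ℕ) (k : ℤ) (ι c0 d0 c0' d0' : ℂ) (s : ℂ) : ℂ :=
  (k : ℂ) * (c0 / s - ι * d0 / ((k : ℂ) - s) + c0' / Npow N k / (s - (k : ℂ) + 1)
    - ι * d0' / Npow N k / (1 - s))

/-- The pole-corrected function `L + corr` agrees away from `{0, k, 1, k-1}` with an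
entire function that is bounded on vertical strips. -/
def EntireBddCorrected (k : ℤ) (L corr : ℂ → ℂ) : Prop :=
  ∃ F : ℂ → ℂ, Differentiable ℂ F ∧ BoundedVert F ∧
    ∀ s : ℂ, s ≠ 0 → s ≠ (k : ℂ) → s ≠ 1 → s ≠ (k : ℂ) - 1 → F s = L s + corr s

/-- Condition (2)(a) of the main theorem: meromorphic continuation, functional
equations, and entire pole-corrected completions bounded on vertical strips. -/
def AnalyticPackage (N : ℕ) (k : ℤ) (α : ℝ) (cfp cfm cgp cgm : ℕ → ℂ) : Prop :=
  ∃ Lf Lg Of' Og : ℂ → ℂ,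
    (∀ s : ℂ, α + 1 < s.re → Lf s = LambdaN N k 1 cfp cfm s) ∧
    (∀ s : ℂ, α + 1 < s.re → Lg s = LambdaN N k 1 cgp cgm s) ∧
    (∀ s : ℂ, α + 1 < s.re → Of' s = OmegaN N k 1 cfp cfm s) ∧
    (∀ s : ℂ, α + 1 < s.re → Og s = OmegaN N k 1 cgp cgm s) ∧
    (∀ s : ℂ, Lf s = Complex.I ^ k * Lg ((k : ℂ) - s)) ∧
    (∀ s : ℂ, Of' s = -(Complex.I ^ k) * Og ((k : ℂ) - s)) ∧
    EntireBddCorrected k Lf (corrL N k (Complex.I ^ k) (cfp 0) (cgp 0) (cfm 0) (cgm 0)) ∧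
    EntireBddCorrected k Lg (corrL N k (Complex.I ^ (-k)) (cgp 0) (cfp 0) (cgm 0) (cfm 0)) ∧
    EntireBddCorrected k Of' (corrO N k (Complex.I ^ k) (cfp 0) (cgp 0) (cfm 0) (cgm 0)) ∧
    EntireBddCorrected k Og (corrO N k (Complex.I ^ (-k)) (cgp 0) (cfp 0) (cgm 0) (cfm 0))

/-- The complex conjugate of a Dirichlet character. -/
def conjChar {N : ℕ} (χ : DirichletCharacter ℂ N) : DirichletCharacter ℂ N :=
  χ.ringHomComp (starRingEnd ℂ)

/-- Twist of a coefficient sequence by a Dirichlet character. -/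
def twistC {m : ℕ} (ψ : DirichletCharacter ℂ m) (c : ℕ → ℂ) : ℕ → ℂ :=
  fun n => ψ (n : ZMod m) * c n

/-- The twisted Fourier series `f_ψ`. -/
def twistFn (k : ℤ) {m : ℕ} (ψ : DirichletCharacter ℂ m) (cp cm : ℕ → ℂ) : ℂ → ℂ :=
  maassSeries k (twistC ψ cp) (twistC ψ cm)

/-- The Gauss sum `τ(ψ) = Σ_{a=0}^{m-1} ψ(a) e^(2πia/m)`. -/
def gSum (m : ℕ) (ψ : DirichletCharacter ℂ m) : ℂ :=
  ∑ a ∈ Finset.range m, ψ (a : ZMod m) * Complex.exp (2 * Real.pi * Complex.I * a / m)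

/-- The analytic package for the `ψ`-twisted completed Dirichlet series: entire
continuations, bounded on vertical strips, with functional equations with
constant `Cψ`. -/
def TwistedPackage (N : ℕ) (k : ℤ) (α : ℝ) (m : ℕ) (ψ : DirichletCharacter ℂ m)
    (cfp cfm cgp cgm : ℕ → ℂ) (Cψ : ℂ) : Prop :=
  ∃ Lf Lg Of' Og : ℂ → ℂ,
    (∀ s : ℂ, α + 1 < s.re → Lf s = LambdaN N k m (twistC ψ cfp) (twistC ψ cfm) s) ∧
    (∀ s : ℂ, α + 1 < s.re →
      Lg s = LambdaN N k m (twistC (conjChar ψ) cgp) (twistC (conjChar ψ) cgm) s) ∧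
    (∀ s : ℂ, α + 1 < s.re → Of' s = OmegaN N k m (twistC ψ cfp) (twistC ψ cfm) s) ∧
    (∀ s : ℂ, α + 1 < s.re →
      Og s = OmegaN N k m (twistC (conjChar ψ) cgp) (twistC (conjChar ψ) cgm) s) ∧
    Differentiable ℂ Lf ∧ Differentiable ℂ Lg ∧ Differentiable ℂ Of' ∧ Differentiable ℂ Og ∧
    BoundedVert Lf ∧ BoundedVert Lg ∧ BoundedVert Of' ∧ BoundedVert Og ∧
    (∀ s : ℂ, Lf s = Complex.I ^ k * Cψ * Lg ((k : ℂ) - s)) ∧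
    (∀ s : ℂ, Of' s = -(Complex.I ^ k) * Cψ * Og ((k : ℂ) - s))

abbrev SL2Z := Matrix.SpecialLinearGroup (Fin 2) ℤ

/-- Entry of a matrix in `SL₂(ℤ)`. -/
def mEntry (g : SL2Z) (i j : Fin 2) : ℤ := (g : Matrix (Fin 2) (Fin 2) ℤ) i j

/-- Slash by a matrix in `SL₂(ℤ)`. -/
def slashM (k : ℤ) (g : SL2Z) (f : ℂ → ℂ) : ℂ → ℂ :=
  slash k (mEntry g 0 0 : ℂ) (mEntry g 0 1 : ℂ) (mEntry g 1 0 : ℂ) (mEntry g 1 1 : ℂ) f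

/-- `Γ₀(N)` as a subset of `SL₂(ℤ)`. -/
def Gamma0Set (N : ℕ) : Set SL2Z := {g | (N : ℤ) ∣ mEntry g 1 0}

/-- `Γ_∞`, the stabiliser of `i∞` in `SL₂(ℤ)`. -/
def GammaInfSet : Set SL2Z := {g | mEntry g 1 0 = 0}

/-- `Γ_ρ = Γ₀(N) ∩ γ_ρ Γ_∞ γ_ρ⁻¹` for the cusp `ρ = γ_ρ(i∞)`. -/
def GammaCusp (N : ℕ) (γρ : SL2Z) : Set SL2Z :=
  {g | g ∈ Gamma0Set N ∧ γρ⁻¹ * g * γρ ∈ GammaInfSet}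

/-- `R` is a complete set of representatives for `Γ_ρ \ Γ₀(N)`. -/
def IsCosetReps (N : ℕ) (γρ : SL2Z) (R : Set SL2Z) : Prop :=
  R ⊆ Gamma0Set N ∧
    ∀ g ∈ Gamma0Set N, ∃! r : SL2Z, r ∈ R ∧ ∃ γ ∈ GammaCusp N γρ, g = γ * r

/-- `χ(g) := χ(d)` for `g = (a b; c d)`. -/
def chiOf {N : ℕ} (χ : DirichletCharacter ℂ N) (g : SL2Z) : ℂ :=
  χ ((mEntry g 1 1 : ℤ) : ZMod N)

/-- The preimage `𝓕_{k,ρ}(N,χ;τ) = Σ_{g ∈ Γ_ρ\Γ₀(N)} χ̄(g) (v^(1-k)/(1-k))|_k γ_ρ⁻¹ g`,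
computed using a set `R` of coset representatives. -/
def FEis (k : ℤ) (N : ℕ) (χ : DirichletCharacter ℂ N) (γρ : SL2Z) (R : Set SL2Z) : ℂ → ℂ :=
  fun τ => ∑' r : R, (starRingEnd ℂ) (chiOf χ (r : SL2Z)) *
    slashM k (γρ⁻¹ * (r : SL2Z)) (fun z => (z.im : ℂ) ^ (1 - k) / ((1 : ℂ) - (k : ℂ))) τ

/-- The Eisenstein series `E_{2-k,ρ}(N,χ;τ) = Σ_{g ∈ Γ_ρ\Γ₀(N)} χ̄(g) j(γ_ρ⁻¹g, τ)^(k-2)`,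
computed using a set `R` of coset representatives. -/
def EisSeries (k : ℤ) (N : ℕ) (χ : DirichletCharacter ℂ N) (γρ : SL2Z) (R : Set SL2Z) :
    ℂ → ℂ := fun τ => ∑' r : R, (starRingEnd ℂ) (chiOf χ (r : SL2Z)) *
      ((mEntry (γρ⁻¹ * (r : SL2Z)) 1 0 : ℂ) * τ + (mEntry (γρ⁻¹ * (r : SL2Z)) 1 1 : ℂ)) ^ (k - 2)

/-- Two cusps `γν(i∞)` and `γρ(i∞)` are `Γ₀(N)`-equivalent. -/
def CuspEquiv (N : ℕ) (γν γρ : SL2Z) : Prop :=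
  ∃ g ∈ Gamma0Set N, ∃ h ∈ GammaInfSet, γν = g * γρ * h

/-!
Write `∂` and `∂̄` for the two Wirtinger derivatives and `v = im τ`. Since `∂̄(ξ_k f)` is a
multiple of the conjugate of `Δ_k f`, harmonicity makes `ξ_k f` holomorphic. It also makes `∂̄f =
(i/2) v^(-k) conj(ξ_k f)`, for `k ≤ 0`, a polynomial of degree `-k` in `τ` over the functions
killed by `∂`, so that `∂̄(∂^(1-k) f) = ∂^(1-k)(∂̄f) = 0`. The transformation laws are those of
`ξ_k` and Bol's identity `∂^(1-k)(f|_k γ) = (∂^(1-k) f)|_(2-k) γ`.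

The growth hypothesis bounds `f|_k γ` but not its derivatives. Convolving with a test function and
integrating by parts bounds these derivatives weakly, and by the mean value property convolving a
holomorphic function with a radial test function only multiplies it by a constant, so the weak
bound is a genuine polynomial bound on `(ξ_k f)|_(2-k) γ` and `(∂^(1-k) f)|_(2-k) γ`. These
functions are `N`-periodic, since `γ (1 N; 0 1) γ⁻¹` lies in `Γ₀(N)` and has lower right entry `1`
modulo `N`, and a periodic holomorphic function of polynomial growth at `i∞` is bounded there.
-/

open UpperHalfPlane (denom num)
open scoped ContDiff ComplexConjugate UpperHalfPlane Topology

/-! ### Wirtinger calculus -/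

section Wirtinger

variable {F G : ℂ → ℂ} {z : ℂ}

lemma fderiv_apply_eq_wirt_add_wirtBar (F : ℂ → ℂ) (z v : ℂ) :
    fderiv ℝ F z v = wirt F z * v + wirtBar F z * conj v := by
  have hv : fderiv ℝ F z v = v.re * fderiv ℝ F z 1 + v.im * fderiv ℝ F z I := by
    conv_lhs => rw [← re_add_im v, ← mul_one (v.re : ℂ), ← real_smul, ← real_smul, map_add,
      map_smul, map_smul, real_smul, real_smul]
  rw [hv, wirt, wirtBar, pdU, pdV]
  nth_rewrite 3 [← re_add_im v]
  have hconj : conj v = v.re - v.im * I := by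
    rw [← conj_re, sub_eq_add_neg, ← neg_mul, ← ofReal_neg, ← conj_im, re_add_im]
  rw [hconj]
  linear_combination (v.im * fderiv ℝ F z I) * I_sq

lemma wirt_eq_of_fderiv_apply_eq {a b : ℂ} (h : ∀ v, fderiv ℝ F z v = a * v + b * conj v) :
    wirt F z = a := by
  rw [wirt, pdU, pdV, h, h, map_one, conj_I]
  linear_combination (b - a) / 2 * I_sq

lemma wirtBar_eq_of_fderiv_apply_eq {a b : ℂ} (h : ∀ v, fderiv ℝ F z v = a * v + b * conj v) :
    wirtBar F z = b := by
  rw [wirtBar, pdU, pdV, h, h, map_one, conj_I]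
  linear_combination (a - b) / 2 * I_sq

lemma wirt_add (hF : DifferentiableAt ℝ F z) (hG : DifferentiableAt ℝ G z) :
    wirt (fun w => F w + G w) z = wirt F z + wirt G z := by
  simp only [wirt, pdU, pdV, fderiv_fun_add hF hG, add_apply]
  ring

lemma wirtBar_add (hF : DifferentiableAt ℝ F z) (hG : DifferentiableAt ℝ G z) :
    wirtBar (fun w => F w + G w) z = wirtBar F z + wirtBar G z := by
  simp only [wirtBar, pdU, pdV, fderiv_fun_add hF hG, add_apply]
  ring

lemma wirt_mul (hF : DifferentiableAt ℝ F z) (hG : DifferentiableAt ℝ G z) :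
    wirt (fun w => F w * G w) z = wirt F z * G z + F z * wirt G z := by
  simp only [wirt, pdU, pdV, fderiv_fun_mul hF hG, add_apply, smul_apply, smul_eq_mul]
  ring

lemma wirtBar_mul (hF : DifferentiableAt ℝ F z) (hG : DifferentiableAt ℝ G z) :
    wirtBar (fun w => F w * G w) z = wirtBar F z * G z + F z * wirtBar G z := by
  simp only [wirtBar, pdU, pdV, fderiv_fun_mul hF hG, add_apply, smul_apply, smul_eq_mul]
  ring

lemma wirt_const_mul (c : ℂ) (hF : DifferentiableAt ℝ F z) :
    wirt (fun w => c * F w) z = c * wirt F z := by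
  simp only [wirt, pdU, pdV, fderiv_const_mul hF, smul_apply, smul_eq_mul]
  ring

lemma wirtBar_const_mul (c : ℂ) (hF : DifferentiableAt ℝ F z) :
    wirtBar (fun w => c * F w) z = c * wirtBar F z := by
  simp only [wirtBar, pdU, pdV, fderiv_const_mul hF, smul_apply, smul_eq_mul]
  ring

lemma fderiv_conj_apply (hF : DifferentiableAt ℝ F z) (v : ℂ) :
    fderiv ℝ (fun w => conj (F w)) z v = conj (wirtBar F z) * v + conj (wirt F z) * conj v := by
  have : fderiv ℝ (fun w => conj (F w)) z v = conj (fderiv ℝ F z v) :=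
    DFunLike.congr_fun (conjCLE.toContinuousLinearMap.hasFDerivAt.comp z hF.hasFDerivAt).fderiv v
  rw [this, fderiv_apply_eq_wirt_add_wirtBar, map_add, map_mul, map_mul, conj_conj, add_comm]

lemma wirt_conj (hF : DifferentiableAt ℝ F z) :
    wirt (fun w => conj (F w)) z = conj (wirtBar F z) :=
  wirt_eq_of_fderiv_apply_eq (fderiv_conj_apply hF)

lemma wirtBar_conj (hF : DifferentiableAt ℝ F z) :
    wirtBar (fun w => conj (F w)) z = conj (wirt F z) :=
  wirtBar_eq_of_fderiv_apply_eq (fderiv_conj_apply hF)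

lemma fderiv_comp_apply_of_hasDerivAt {g : ℂ → ℂ} {g' : ℂ} (hF : DifferentiableAt ℝ F (g z))
    (hg : HasDerivAt g g' z) (v : ℂ) : fderiv ℝ (fun w => F (g w)) z v =
      g' * wirt F (g z) * v + conj g' * wirtBar F (g z) * conj v := by
  have : fderiv ℝ (fun w => F (g w)) z v = fderiv ℝ F (g z) (g' * v) :=
    DFunLike.congr_fun (hF.hasFDerivAt.comp z hg.complexToReal_fderiv).fderiv v
  rw [this, fderiv_apply_eq_wirt_add_wirtBar, map_mul]
  ring

lemma wirt_comp_of_hasDerivAt {g : ℂ → ℂ} {g' : ℂ} (hF : DifferentiableAt ℝ F (g z))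
    (hg : HasDerivAt g g' z) : wirt (fun w => F (g w)) z = g' * wirt F (g z) :=
  wirt_eq_of_fderiv_apply_eq (fderiv_comp_apply_of_hasDerivAt hF hg)

lemma wirtBar_comp_of_hasDerivAt {g : ℂ → ℂ} {g' : ℂ} (hF : DifferentiableAt ℝ F (g z))
    (hg : HasDerivAt g g' z) : wirtBar (fun w => F (g w)) z = conj g' * wirtBar F (g z) :=
  wirtBar_eq_of_fderiv_apply_eq (fderiv_comp_apply_of_hasDerivAt hF hg)

lemma wirt_of_hasDerivAt {F' : ℂ} (hF : HasDerivAt F F' z) : wirt F z = F' :=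
  wirt_eq_of_fderiv_apply_eq (b := 0) fun v => by
    simp [hF.complexToReal_fderiv.fderiv]

lemma differentiableAt_complex_iff_wirtBar_eq_zero (hF : DifferentiableAt ℝ F z) :
    DifferentiableAt ℂ F z ↔ wirtBar F z = 0 := by
  rw [differentiableAt_complex_iff_differentiableAt_real, wirtBar, pdU, pdV, smul_eq_mul]
  refine ⟨fun h => ?_, fun h => ⟨hF, ?_⟩⟩
  · linear_combination I / 2 * h.2 + fderiv ℝ F z 1 / 2 * I_sq
  · linear_combination -2 * I * h + fderiv ℝ F z I * I_sq

lemma contDiffAt_im_zpow (m : ℤ) {n : ℕ∞ω} (hz : z.im ≠ 0) :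
    ContDiffAt ℝ n (fun w : ℂ => (w.im : ℂ) ^ m) z :=
  have h : ContDiffAt ℂ n (fun w : ℂ => w ^ m) (z.im : ℂ) :=
    (analyticAt_id.zpow (ofReal_ne_zero.2 hz)).contDiffAt
  (h.restrict_scalars ℝ).comp z (ofRealCLM.contDiff.comp imCLM.contDiff).contDiffAt

lemma fderiv_im_zpow_apply (m : ℤ) (hz : z.im ≠ 0) (v : ℂ) :
    fderiv ℝ (fun w : ℂ => (w.im : ℂ) ^ m) z v =
      -(I / 2) * m * (z.im : ℂ) ^ (m - 1) * v + I / 2 * m * (z.im : ℂ) ^ (m - 1) * conj v := by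
  have h : HasFDerivAt (fun w : ℂ => (w.im : ℂ) ^ m) _ z :=
    ((hasDerivAt_zpow m _ (.inl (ofReal_ne_zero.2 hz))).hasFDerivAt.restrictScalars ℝ).comp
      (f := fun w : ℂ => (w.im : ℂ)) z (ofRealCLM.comp imCLM).hasFDerivAt
  have hv : fderiv ℝ (fun w : ℂ => (w.im : ℂ) ^ m) z v = v.im * (m * (z.im : ℂ) ^ (m - 1)) := by
    rw [h.fderiv]
    simp
  rw [hv, im_eq_sub_conj v, div_eq_mul_inv, mul_inv, inv_I]
  ring

lemma wirt_im_zpow (m : ℤ) (hz : z.im ≠ 0) :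
    wirt (fun w : ℂ => (w.im : ℂ) ^ m) z = -(I / 2) * m * (z.im : ℂ) ^ (m - 1) :=
  wirt_eq_of_fderiv_apply_eq (fderiv_im_zpow_apply m hz)

lemma wirtBar_im_zpow (m : ℤ) (hz : z.im ≠ 0) :
    wirtBar (fun w : ℂ => (w.im : ℂ) ^ m) z = I / 2 * m * (z.im : ℂ) ^ (m - 1) :=
  wirtBar_eq_of_fderiv_apply_eq (fderiv_im_zpow_apply m hz)

lemma pdU_pdV_comm (hF : ContDiffAt ℝ 2 F z) : pdU (pdV F) z = pdV (pdU F) z := by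
  have hd : DifferentiableAt ℝ (fderiv ℝ F) z :=
    (hF.fderiv_right (m := 1) (by norm_num)).differentiableAt (by norm_num)
  have h (v w : ℂ) : fderiv ℝ (fun x => fderiv ℝ F x v) z w = fderiv ℝ (fderiv ℝ F) z w v := by
    rw [fderiv_clm_apply hd (differentiableAt_const v)]
    simp
  exact (h I 1).trans <| (hF.isSymmSndFDerivAt (by simp) 1 I).trans (h 1 I).symm

end Wirtinger

section Smooth

variable {F G : ℂ → ℂ} {U : Set ℂ} {z : ℂ}

lemma differentiableAt_of_contDiffOn (hU : IsOpen U) (hF : ContDiffOn ℝ ∞ F U) (hz : z ∈ U) :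
    DifferentiableAt ℝ F z :=
  (hF.contDiffAt (hU.mem_nhds hz)).differentiableAt (by simp)

lemma contDiffOn_fderiv_apply (hU : IsOpen U) (hF : ContDiffOn ℝ ∞ F U) (v : ℂ) :
    ContDiffOn ℝ ∞ (fun z => fderiv ℝ F z v) U :=
  (hF.fderiv_of_isOpen hU (by simp)).clm_apply contDiffOn_const

lemma contDiffOn_wirt (hU : IsOpen U) (hF : ContDiffOn ℝ ∞ F U) : ContDiffOn ℝ ∞ (wirt F) U :=
  ((contDiffOn_fderiv_apply hU hF 1).sub
    (contDiffOn_const.mul (contDiffOn_fderiv_apply hU hF I))).div_const 2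

lemma contDiffOn_wirtBar (hU : IsOpen U) (hF : ContDiffOn ℝ ∞ F U) :
    ContDiffOn ℝ ∞ (wirtBar F) U :=
  ((contDiffOn_fderiv_apply hU hF 1).add
    (contDiffOn_const.mul (contDiffOn_fderiv_apply hU hF I))).div_const 2

lemma contDiffOn_iterate_wirt (hU : IsOpen U) (hF : ContDiffOn ℝ ∞ F U) (n : ℕ) :
    ContDiffOn ℝ ∞ (wirt^[n] F) U := by
  induction n with
  | zero => exact hF
  | succ n ih => rw [Function.iterate_succ_apply']; exact contDiffOn_wirt hU ih

lemma eqOn_wirt (hU : IsOpen U) (h : EqOn F G U) : EqOn (wirt F) (wirt G) U := fun z hz => by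
  simp only [wirt, pdU, pdV, (h.eventuallyEq_of_mem (hU.mem_nhds hz)).fderiv_eq]

lemma eqOn_wirtBar (hU : IsOpen U) (h : EqOn F G U) : EqOn (wirtBar F) (wirtBar G) U :=
  fun z hz => by
    simp only [wirtBar, pdU, pdV, (h.eventuallyEq_of_mem (hU.mem_nhds hz)).fderiv_eq]

lemma eqOn_iterate_wirt (hU : IsOpen U) (h : EqOn F G U) (n : ℕ) :
    EqOn (wirt^[n] F) (wirt^[n] G) U := by
  induction n with
  | zero => exact h
  | succ n ih => simp only [Function.iterate_succ_apply']; exact eqOn_wirt hU ih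

lemma iterate_wirt_const_mul (hU : IsOpen U) (hF : ContDiffOn ℝ ∞ F U) (c : ℂ) (n : ℕ) :
    EqOn (wirt^[n] fun z => c * F z) (fun z => c * wirt^[n] F z) U := by
  induction n with
  | zero => exact fun _ _ => rfl
  | succ n ih =>
    intro z hz
    simp only [Function.iterate_succ_apply']
    rw [eqOn_wirt hU ih hz, wirt_const_mul c
      (differentiableAt_of_contDiffOn hU (contDiffOn_iterate_wirt hU hF n) hz)]

lemma wirtBar_wirt (hU : IsOpen U) (hF : ContDiffOn ℝ ∞ F U) (hz : z ∈ U) :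
    wirtBar (wirt F) z = (pdU (pdU F) z + pdV (pdV F) z) / 4 := by
  have hu : DifferentiableAt ℝ (pdU F) z :=
    differentiableAt_of_contDiffOn hU (contDiffOn_fderiv_apply hU hF 1) hz
  have hv : DifferentiableAt ℝ (pdV F) z :=
    differentiableAt_of_contDiffOn hU (contDiffOn_fderiv_apply hU hF I) hz
  have : wirt F = fun w => 1 / 2 * pdU F w + -(I / 2) * pdV F w := by
    ext w; rw [wirt]; ring
  rw [this, wirtBar_add (hu.const_mul _) (hv.const_mul _), wirtBar_const_mul _ hu,
    wirtBar_const_mul _ hv, wirtBar, wirtBar,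
    pdU_pdV_comm ((hF.contDiffAt (hU.mem_nhds hz)).of_le (by norm_cast))]
  linear_combination -(1 / 4) * pdV (pdV F) z * I_sq

lemma wirt_wirtBar (hU : IsOpen U) (hF : ContDiffOn ℝ ∞ F U) (hz : z ∈ U) :
    wirt (wirtBar F) z = (pdU (pdU F) z + pdV (pdV F) z) / 4 := by
  have hu : DifferentiableAt ℝ (pdU F) z :=
    differentiableAt_of_contDiffOn hU (contDiffOn_fderiv_apply hU hF 1) hz
  have hv : DifferentiableAt ℝ (pdV F) z :=
    differentiableAt_of_contDiffOn hU (contDiffOn_fderiv_apply hU hF I) hz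
  have : wirtBar F = fun w => 1 / 2 * pdU F w + I / 2 * pdV F w := by
    ext w; rw [wirtBar]; ring
  rw [this, wirt_add (hu.const_mul _) (hv.const_mul _), wirt_const_mul _ hu,
    wirt_const_mul _ hv, wirt, wirt,
    pdU_pdV_comm ((hF.contDiffAt (hU.mem_nhds hz)).of_le (by norm_cast))]
  linear_combination -(1 / 4) * pdV (pdV F) z * I_sq

lemma wirtBar_iterate_wirt (hU : IsOpen U) (hF : ContDiffOn ℝ ∞ F U) (n : ℕ) :
    EqOn (wirtBar (wirt^[n] F)) (wirt^[n] (wirtBar F)) U := by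
  induction n with
  | zero => exact fun _ _ => rfl
  | succ n ih =>
    intro z hz
    have hn := contDiffOn_iterate_wirt hU hF n
    rw [Function.iterate_succ_apply', Function.iterate_succ_apply', wirtBar_wirt hU hn hz,
      ← wirt_wirtBar hU hn hz, eqOn_wirt hU ih hz]

lemma iterate_wirt_succ_affine_mul (hU : IsOpen U) (hF : ContDiffOn ℝ ∞ F U) (c d : ℂ) (n : ℕ) :
    EqOn (wirt^[n + 1] fun z => (c * z + d) * F z)
      (fun z => (c * z + d) * wirt^[n + 1] F z + (n + 1) * c * wirt^[n] F z) U := by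
  have hlin (z : ℂ) : HasDerivAt (fun w => c * w + d) c z := by
    simpa using ((hasDerivAt_id z).const_mul c).add_const d
  have hmul {G : ℂ → ℂ} {z : ℂ} (hG : DifferentiableAt ℝ G z) :
      wirt (fun w => (c * w + d) * G w) z = (c * z + d) * wirt G z + c * G z := by
    rw [wirt_mul ((hlin z).differentiableAt.restrictScalars ℝ) hG, wirt_of_hasDerivAt (hlin z),
      add_comm]
  have hdiff (m : ℕ) {z : ℂ} (hz : z ∈ U) : DifferentiableAt ℝ (wirt^[m] F) z :=
    differentiableAt_of_contDiffOn hU (contDiffOn_iterate_wirt hU hF m) hz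
  induction n with
  | zero => exact fun z hz => by simpa using hmul (hdiff 0 hz)
  | succ n ih =>
    intro z hz
    rw [Function.iterate_succ_apply', eqOn_wirt hU ih hz,
      wirt_add (((hlin z).differentiableAt.restrictScalars ℝ).fun_mul (hdiff _ hz))
        ((hdiff _ hz).const_mul _), hmul (hdiff _ hz), wirt_const_mul _ (hdiff _ hz),
      ← Function.iterate_succ_apply' wirt, ← Function.iterate_succ_apply' wirt]
    push_cast
    ring

end Smooth

/-! ### Holomorphy of `ξ_k f` and of `∂^(1-k) f` -/

section Holomorphy

variable {f W : ℂ → ℂ} {k : ℤ} {z : ℂ}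

lemma isOpen_UHP : IsOpen UHP := isOpen_lt continuous_const continuous_im

lemma contDiffOn_im_zpow (m : ℤ) : ContDiffOn ℝ ∞ (fun z : ℂ => (z.im : ℂ) ^ m) UHP :=
  fun _ hz => (contDiffAt_im_zpow m (ne_of_gt hz)).contDiffWithinAt

lemma contDiffOn_xiOp (k : ℤ) (hf : ContDiffOn ℝ ∞ f UHP) : ContDiffOn ℝ ∞ (xiOp k f) UHP :=
  (contDiffOn_const.mul (contDiffOn_im_zpow k)).mul
    (conjCLE.contDiff.comp_contDiffOn (contDiffOn_wirtBar isOpen_UHP hf))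

lemma hypLaplacian_eq (hf : ContDiffOn ℝ ∞ f UHP) (hz : z ∈ UHP) :
    hypLaplacian k f z =
      -4 * (z.im : ℂ) ^ 2 * wirt (wirtBar f) z + 2 * I * k * z.im * wirtBar f z := by
  rw [hypLaplacian, wirt_wirtBar isOpen_UHP hf hz, wirtBar]
  ring

lemma wirtBar_xiOp (hf : ContDiffOn ℝ ∞ f UHP) (hz : z ∈ UHP) :
    wirtBar (xiOp k f) z = -(I / 2) * (z.im : ℂ) ^ (k - 2) * conj (hypLaplacian k f z) := by
  have him : z.im ≠ 0 := ne_of_gt hz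
  have hpow : DifferentiableAt ℝ (fun w : ℂ => (w.im : ℂ) ^ k) z :=
    differentiableAt_of_contDiffOn isOpen_UHP (contDiffOn_im_zpow k) hz
  have hbar := differentiableAt_of_contDiffOn isOpen_UHP (contDiffOn_wirtBar isOpen_UHP hf) hz
  have hconj : DifferentiableAt ℝ (fun w => conj (wirtBar f w)) z :=
    conjCLE.differentiableAt.comp z hbar
  unfold xiOp
  rw [wirtBar_mul (hpow.const_mul _) hconj, wirtBar_const_mul _ hpow, wirtBar_im_zpow k him,
    wirtBar_conj hbar, hypLaplacian_eq hf hz]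
  simp only [map_add, map_mul, map_neg, map_pow, conj_ofReal, conj_I, map_ofNat, map_intCast]
  have h0 : (z.im : ℂ) ≠ 0 := ofReal_ne_zero.2 him
  rw [zpow_sub_one₀ h0, zpow_sub₀ h0, zpow_ofNat]
  field_simp
  ring

lemma differentiableOn_xiOp_of_harmonic (hf : ContDiffOn ℝ ∞ f UHP)
    (hΔ : ∀ z ∈ UHP, hypLaplacian k f z = 0) : DifferentiableOn ℂ (xiOp k f) UHP := fun z hz => by
  have h := differentiableAt_of_contDiffOn isOpen_UHP (contDiffOn_xiOp k hf) hz
  refine ((differentiableAt_complex_iff_wirtBar_eq_zero h).2 ?_).differentiableWithinAt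
  rw [wirtBar_xiOp hf hz, hΔ z hz, map_zero, mul_zero]

lemma wirtBar_eq_xiOp (hz : z ∈ UHP) :
    wirtBar f z = I / 2 * (z.im : ℂ) ^ (-k) * conj (xiOp k f z) := by
  have h0 : (z.im : ℂ) ^ k ≠ 0 := zpow_ne_zero _ (ofReal_ne_zero.2 (ne_of_gt hz))
  simp only [xiOp, map_mul, map_ofNat, conj_I, map_zpow₀, conj_ofReal, conj_conj, zpow_neg]
  field_simp
  linear_combination wirtBar f z * I_sq

/-- For `∂`, which treats `τ̄` as a constant, `v ^ n = ((τ - τ̄) / 2i) ^ n` is a polynomial of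
degree `n` in `τ`. -/
lemma iterate_wirt_succ_im_pow_mul (hW : ContDiffOn ℝ ∞ W UHP) (hW' : EqOn (wirt W) 0 UHP)
    (n : ℕ) : EqOn (wirt^[n + 1] fun z => (z.im : ℂ) ^ n * W z) 0 UHP := by
  induction n with
  | zero => simpa using hW'
  | succ n ih =>
    have hstep : EqOn (wirt fun z => (z.im : ℂ) ^ (n + 1) * W z)
        (fun z => -(I / 2) * (n + 1) * ((z.im : ℂ) ^ n * W z)) UHP := fun z hz => by
      have hpow := wirt_im_zpow (n + 1 : ℕ) (ne_of_gt hz : z.im ≠ 0)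
      have hd := differentiableAt_of_contDiffOn isOpen_UHP (contDiffOn_im_zpow (n + 1 : ℕ)) hz
      simp only [zpow_natCast] at hpow hd
      rw [wirt_mul hd (differentiableAt_of_contDiffOn isOpen_UHP hW hz), hpow, hW' hz]
      simp only [Nat.cast_add, Nat.cast_one, Int.cast_add, Int.cast_natCast, Int.cast_one,
        add_sub_cancel_right, zpow_natCast, Pi.zero_apply]
      ring
    intro z hz
    have hsm : ContDiffOn ℝ ∞ (fun z : ℂ => (z.im : ℂ) ^ n * W z) UHP := by
      simpa using (contDiffOn_im_zpow n).mul hW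
    rw [Function.iterate_succ_apply, eqOn_iterate_wirt isOpen_UHP hstep _ hz,
      iterate_wirt_const_mul isOpen_UHP hsm _ _ hz]
    simp only [ih hz, Pi.zero_apply, mul_zero]

lemma differentiableOn_iterate_wirt_of_harmonic {n : ℕ} (hf : ContDiffOn ℝ ∞ f UHP)
    (hΔ : ∀ z ∈ UHP, hypLaplacian (-n) f z = 0) :
    DifferentiableOn ℂ (wirt^[n + 1] f) UHP := fun z hz => by
  have hW : ContDiffOn ℝ ∞ (fun z => conj (xiOp (-n) f z)) UHP :=
    conjCLE.contDiff.comp_contDiffOn (contDiffOn_xiOp _ hf)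
  have hxi {w : ℂ} (hw : w ∈ UHP) : DifferentiableAt ℝ (xiOp (-n) f) w :=
    differentiableAt_of_contDiffOn isOpen_UHP (contDiffOn_xiOp _ hf) hw
  have hW' : EqOn (wirt fun z => conj (xiOp (-n) f z)) 0 UHP := fun w hw => by
    rw [wirt_conj (hxi hw), wirtBar_xiOp hf hw, hΔ w hw]
    simp
  have hbar : EqOn (wirtBar f)
      (fun z => I / 2 * ((z.im : ℂ) ^ n * conj (xiOp (-n) f z))) UHP := fun w hw => by
    rw [wirtBar_eq_xiOp (k := -n) hw, neg_neg, zpow_natCast, mul_assoc]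
  have hsm : ContDiffOn ℝ ∞ (fun z : ℂ => (z.im : ℂ) ^ n * conj (xiOp (-n) f z)) UHP := by
    simpa using (contDiffOn_im_zpow n).mul hW
  have hd :=
    differentiableAt_of_contDiffOn isOpen_UHP (contDiffOn_iterate_wirt isOpen_UHP hf (n + 1)) hz
  refine ((differentiableAt_complex_iff_wirtBar_eq_zero hd).2 ?_).differentiableWithinAt
  rw [wirtBar_iterate_wirt isOpen_UHP hf _ hz, eqOn_iterate_wirt isOpen_UHP hbar _ hz,
    iterate_wirt_const_mul isOpen_UHP hsm _ _ hz]
  simp only [iterate_wirt_succ_im_pow_mul hW hW' n hz, Pi.zero_apply, mul_zero]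

end Holomorphy

/-! ### The slash operator -/

section Slash

variable {F G f : ℂ → ℂ} {k : ℤ} {N : ℕ} {χ : DirichletCharacter ℂ N} {z : ℂ}

/-- The action of `γ ∈ SL₂(ℤ)` by a fractional linear transformation, as a function on `ℂ`; on
the upper half-plane it is Mathlib's action on `ℍ`, see `moebius_coe`. -/
def moebius (γ : SL2Z) (z : ℂ) : ℂ := num γ z / denom γ z

lemma moebius_coe (γ : SL2Z) (τ : ℍ) : moebius γ τ = (γ • τ : ℍ) := by
  rw [ModularGroup.sl_moeb, UpperHalfPlane.coe_smul_of_det_pos (by simp), moebius]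

lemma moebius_mem_UHP (γ : SL2Z) (hz : z ∈ UHP) : moebius γ z ∈ UHP := by
  lift z to ℍ using hz
  rw [moebius_coe]
  exact (γ • z).im_pos

lemma moebius_mul (γ δ : SL2Z) (hz : z ∈ UHP) :
    moebius (γ * δ) z = moebius γ (moebius δ z) := by
  lift z to ℍ using hz
  rw [moebius_coe, moebius_coe, moebius_coe, mul_smul]

lemma denom_ne_zero_of_mem_UHP (γ : SL2Z) (hz : z ∈ UHP) : denom γ z ≠ 0 :=
  UpperHalfPlane.denom_ne_zero_of_im _ (ne_of_gt hz)

lemma denom_eq (γ : SL2Z) (z : ℂ) : denom γ z = mEntry γ 1 0 * z + mEntry γ 1 1 := by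
  simp [denom, mEntry]

lemma num_eq (γ : SL2Z) (z : ℂ) : num γ z = mEntry γ 0 0 * z + mEntry γ 0 1 := by
  simp [num, mEntry]

lemma det_mEntry (γ : SL2Z) : mEntry γ 0 0 * mEntry γ 1 1 - mEntry γ 0 1 * mEntry γ 1 0 = 1 :=
  (Matrix.det_fin_two _).symm.trans γ.det_coe

lemma im_moebius (γ : SL2Z) (hz : z ∈ UHP) :
    ((moebius γ z).im : ℂ) = z.im / (denom γ z * conj (denom γ z)) := by
  lift z to ℍ using hz
  rw [moebius_coe, UpperHalfPlane.coe_im, ModularGroup.im_smul_eq_div_normSq, mul_conj,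
    ofReal_div, UpperHalfPlane.coe_im]

lemma hasDerivAt_denom (γ : SL2Z) (z : ℂ) : HasDerivAt (denom γ) (mEntry γ 1 0) z := by
  simpa [funext (denom_eq γ)] using
    ((hasDerivAt_id z).const_mul (mEntry γ 1 0 : ℂ)).add_const (mEntry γ 1 1 : ℂ)

lemma hasDerivAt_moebius (γ : SL2Z) (hz : z ∈ UHP) :
    HasDerivAt (moebius γ) (denom γ z ^ (-2 : ℤ)) z := by
  have hnum : HasDerivAt (num γ) (mEntry γ 0 0) z := by
    simpa [funext (num_eq γ)] using
      ((hasDerivAt_id z).const_mul (mEntry γ 0 0 : ℂ)).add_const (mEntry γ 0 1 : ℂ)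
  have hdet : (mEntry γ 0 0 * mEntry γ 1 1 - mEntry γ 0 1 * mEntry γ 1 0 : ℂ) = 1 := by
    exact_mod_cast det_mEntry γ
  have hW : mEntry γ 0 0 * denom γ z - num γ z * mEntry γ 1 0 = 1 := by
    rw [denom_eq, num_eq]
    linear_combination hdet
  have h := hnum.div (hasDerivAt_denom γ z) (denom_ne_zero_of_mem_UHP γ hz)
  rwa [hW, one_div, ← zpow_ofNat, ← zpow_neg] at h

lemma hasDerivAt_denom_zpow (γ : SL2Z) (m : ℤ) (hz : z ∈ UHP) :
    HasDerivAt (fun w => denom γ w ^ m) (m * denom γ z ^ (m - 1) * mEntry γ 1 0) z :=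
  (hasDerivAt_zpow m _ (.inl (denom_ne_zero_of_mem_UHP γ hz))).comp z (hasDerivAt_denom γ z)

lemma slashM_apply (k : ℤ) (γ : SL2Z) (F : ℂ → ℂ) (z : ℂ) :
    slashM k γ F z = denom γ z ^ (-k) * F (moebius γ z) := by
  have hdet : (mEntry γ 0 0 * mEntry γ 1 1 - mEntry γ 0 1 * mEntry γ 1 0 : ℂ) = 1 := by
    exact_mod_cast det_mEntry γ
  rw [slashM, slash, hdet, one_cpow, one_mul, moebius, denom_eq, num_eq]

lemma slashM_mul (k : ℤ) (γ δ : SL2Z) (F : ℂ → ℂ) (hz : z ∈ UHP) :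
    slashM k (γ * δ) F z = slashM k δ (slashM k γ F) z := by
  have hden : denom ↑(γ * δ) z = denom γ (moebius δ z) * denom δ z := by
    rw [map_mul, map_mul]
    exact UpperHalfPlane.denom_cocycle _ _ (ne_of_gt hz)
  rw [slashM_apply, slashM_apply, slashM_apply, moebius_mul γ δ hz, hden, mul_zpow]
  ring

lemma slashM_const_mul (k : ℤ) (γ : SL2Z) (c : ℂ) (F : ℂ → ℂ) (z : ℂ) :
    slashM k γ (fun w => c * F w) z = c * slashM k γ F z := by
  rw [slashM_apply, slashM_apply, mul_left_comm]

lemma eqOn_slashM (γ : SL2Z) (h : EqOn F G UHP) : EqOn (slashM k γ F) (slashM k γ G) UHP :=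
  fun z hz => by rw [slashM_apply, slashM_apply, h (moebius_mem_UHP γ hz)]

lemma denom_mul_slashM (γ : SL2Z) (hz : z ∈ UHP) :
    denom γ z * slashM k γ F z = slashM (k - 1) γ F z := by
  rw [slashM_apply, slashM_apply, ← mul_assoc, neg_sub, sub_eq_neg_add,
    zpow_add_one₀ (denom_ne_zero_of_mem_UHP γ hz), mul_comm (denom γ z)]

lemma slashM_T_zpow (k n : ℤ) (F : ℂ → ℂ) (z : ℂ) :
    slashM k (ModularGroup.T ^ n) F z = F (z + n) := by
  rw [slashM_apply, moebius, denom_eq, num_eq]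
  simp only [mEntry, ModularGroup.coe_T_zpow]
  simp

lemma contDiffOn_slashM (γ : SL2Z) (hF : ContDiffOn ℝ ∞ F UHP) :
    ContDiffOn ℝ ∞ (slashM k γ F) UHP := by
  have hden : DifferentiableOn ℂ (fun w => denom γ w ^ (-k)) UHP := fun w hw =>
    (hasDerivAt_denom_zpow γ _ hw).differentiableAt.differentiableWithinAt
  have hmoeb : DifferentiableOn ℂ (moebius γ) UHP := fun w hw =>
    (hasDerivAt_moebius γ hw).differentiableAt.differentiableWithinAt
  rw [funext (slashM_apply k γ F)]
  exact ((hden.contDiffOn isOpen_UHP).restrict_scalars ℝ).mul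
    (hF.comp ((hmoeb.contDiffOn isOpen_UHP).restrict_scalars ℝ) fun w hw => moebius_mem_UHP γ hw)

lemma differentiableOn_slashM (γ : SL2Z) (hF : DifferentiableOn ℂ F UHP) :
    DifferentiableOn ℂ (slashM k γ F) UHP := by
  rw [funext (slashM_apply k γ F)]
  exact fun w hw =>
    ((hasDerivAt_denom_zpow γ _ hw).differentiableAt.differentiableWithinAt).mul
      ((hF _ (moebius_mem_UHP γ hw)).comp w
        (hasDerivAt_moebius γ hw).differentiableAt.differentiableWithinAt
        fun w hw => moebius_mem_UHP γ hw)

lemma wirt_slashM (γ : SL2Z) (hF : ContDiffOn ℝ ∞ F UHP) (hz : z ∈ UHP) :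
    wirt (slashM k γ F) z =
      slashM (k + 2) γ (wirt F) z - k * mEntry γ 1 0 / denom γ z * slashM k γ F z := by
  have hFz := differentiableAt_of_contDiffOn isOpen_UHP hF (moebius_mem_UHP γ hz)
  have hm := hasDerivAt_moebius γ hz
  have hFm : DifferentiableAt ℝ (fun w => F (moebius γ w)) z :=
    hFz.comp z (hm.differentiableAt.restrictScalars ℝ)
  have hd := hasDerivAt_denom_zpow γ (-k) hz
  have h0 := denom_ne_zero_of_mem_UHP γ hz
  rw [funext (slashM_apply k γ F), wirt_mul (hd.differentiableAt.restrictScalars ℝ)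
    hFm, wirt_of_hasDerivAt hd,
    wirt_comp_of_hasDerivAt hFz hm, slashM_apply, neg_add, zpow_add₀ h0, zpow_sub_one₀ h0]
  push_cast
  ring

lemma wirtBar_slashM (γ : SL2Z) (hF : ContDiffOn ℝ ∞ F UHP) (hz : z ∈ UHP) :
    wirtBar (slashM k γ F) z =
      denom γ z ^ (-k) * conj (denom γ z ^ (-2 : ℤ)) * wirtBar F (moebius γ z) := by
  have hFz := differentiableAt_of_contDiffOn isOpen_UHP hF (moebius_mem_UHP γ hz)
  have hm := hasDerivAt_moebius γ hz
  have hFm : DifferentiableAt ℝ (fun w => F (moebius γ w)) z :=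
    hFz.comp z (hm.differentiableAt.restrictScalars ℝ)
  have hd := (hasDerivAt_denom_zpow γ (-k) hz).differentiableAt
  have hd' := hd.restrictScalars ℝ
  rw [funext (slashM_apply k γ F), wirtBar_mul hd' hFm,
    (differentiableAt_complex_iff_wirtBar_eq_zero hd').1 hd, wirtBar_comp_of_hasDerivAt hFz hm]
  ring

lemma xiOp_slashM (γ : SL2Z) (hF : ContDiffOn ℝ ∞ F UHP) :
    EqOn (xiOp k (slashM k γ F)) (slashM (2 - k) γ (xiOp k F)) UHP := fun z hz => by
  have h0 := denom_ne_zero_of_mem_UHP γ hz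
  have h0' : conj (denom γ z) ≠ 0 := (map_ne_zero _).2 h0
  rw [xiOp, wirtBar_slashM γ hF hz, slashM_apply, xiOp, im_moebius γ hz]
  simp only [map_mul, map_inv₀, map_zpow₀, conj_conj, div_zpow, mul_zpow, neg_sub, zpow_sub₀ h0,
    zpow_neg]
  field_simp

lemma iterate_wirt_slashM (γ : SL2Z) (hF : ContDiffOn ℝ ∞ F UHP) (n : ℕ) :
    EqOn (wirt^[n + 1] (slashM (-n) γ F)) (slashM (2 + n) γ (wirt^[n + 1] F)) UHP := by
  induction n with
  | zero => exact fun z hz => by simp [wirt_slashM γ hF hz]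
  | succ n ih =>
    intro z hz
    have h0 := denom_ne_zero_of_mem_UHP γ hz
    have hden : EqOn (slashM (-(n + 1 : ℕ)) γ F)
        (fun w => (mEntry γ 1 0 * w + mEntry γ 1 1) * slashM (-n) γ F w) UHP := fun w hw => by
      simp only
      rw [← denom_eq, denom_mul_slashM γ hw, Nat.cast_succ, neg_add']
    have hder : wirt^[n + 1 + 1] (slashM (-n) γ F) z = slashM (2 + n + 2) γ (wirt^[n + 1 + 1] F) z -
        (2 + n) * mEntry γ 1 0 / denom γ z * slashM (2 + n) γ (wirt^[n + 1] F) z := by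
      rw [Function.iterate_succ_apply', eqOn_wirt isOpen_UHP ih hz,
        wirt_slashM γ (contDiffOn_iterate_wirt isOpen_UHP hF _) hz,
        ← Function.iterate_succ_apply' wirt]
      norm_cast
    have hweight : (2 + (n + 1 : ℕ) : ℤ) = 2 + n + 2 - 1 := by push_cast; ring
    rw [eqOn_iterate_wirt isOpen_UHP hden _ hz,
      iterate_wirt_succ_affine_mul isOpen_UHP (contDiffOn_slashM γ hF) _ _ _ hz, hweight,
      ← denom_mul_slashM γ hz]
    simp only [hder, ih hz, ← denom_eq]
    push_cast
    field_simp
    ring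

lemma eqOn_xiOp (h : EqOn F G UHP) : EqOn (xiOp k F) (xiOp k G) UHP := fun z hz => by
  rw [xiOp, xiOp, eqOn_wirtBar isOpen_UHP h hz]

lemma xiOp_const_mul (c : ℂ) (hF : ContDiffOn ℝ ∞ F UHP) (hz : z ∈ UHP) :
    xiOp k (fun w => c * F w) z = conj c * xiOp k F z := by
  rw [xiOp, xiOp, wirtBar_const_mul c (differentiableAt_of_contDiffOn isOpen_UHP hF hz), map_mul]
  ring

lemma forall_SL2Z_iff {P : ℤ → ℤ → ℤ → ℤ → Prop} :
    (∀ a b c d, a * d - b * c = 1 → P a b c d) ↔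
      ∀ γ : SL2Z, P (mEntry γ 0 0) (mEntry γ 0 1) (mEntry γ 1 0) (mEntry γ 1 1) :=
  ⟨fun h γ => h _ _ _ _ (det_mEntry γ),
    fun h a b c d hdet => h ⟨!![a, b; c, d], by rw [Matrix.det_fin_two_of, hdet]⟩⟩

lemma slashInv_iff : SlashInv k N χ f ↔
    ∀ γ ∈ Gamma0Set N, ∀ z ∈ UHP, slashM k γ f z = chiOf χ γ * f z :=
  forall_SL2Z_iff

lemma coe_mul_T_zpow_mul_inv (γ : SL2Z) (n : ℤ) :
    ((γ * ModularGroup.T ^ n * γ⁻¹ : SL2Z) : Matrix (Fin 2) (Fin 2) ℤ) =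
      !![1 - n * (mEntry γ 0 0 * mEntry γ 1 0), n * mEntry γ 0 0 ^ 2;
        n * -mEntry γ 1 0 ^ 2, 1 + n * (mEntry γ 0 0 * mEntry γ 1 0)] := by
  have hcoe : (γ : Matrix (Fin 2) (Fin 2) ℤ) =
      !![mEntry γ 0 0, mEntry γ 0 1; mEntry γ 1 0, mEntry γ 1 1] := Matrix.eta_fin_two _
  have hdet := det_mEntry γ
  rw [Matrix.SpecialLinearGroup.coe_mul, Matrix.SpecialLinearGroup.coe_mul,
    ModularGroup.coe_T_zpow, Matrix.SpecialLinearGroup.coe_inv, hcoe,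
    Matrix.adjugate_fin_two_of, Matrix.mul_fin_two, Matrix.mul_fin_two]
  ext i j
  fin_cases i <;> fin_cases j <;> dsimp
  · linear_combination hdet
  · ring
  · ring
  · linear_combination hdet

lemma slashM_add_natCast (hf : SlashInv k N χ f) (γ : SL2Z) (hz : z ∈ UHP) :
    slashM k γ f (z + N) = slashM k γ f z := by
  set δ : SL2Z := γ * ModularGroup.T ^ (N : ℤ) * γ⁻¹ with hδ
  have hcoe : (δ : Matrix (Fin 2) (Fin 2) ℤ) = _ := coe_mul_T_zpow_mul_inv γ N
  have hmem : δ ∈ Gamma0Set N := by simp [Gamma0Set, mEntry, hcoe]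
  have hχ : chiOf χ δ = 1 := by simp [chiOf, mEntry, hcoe]
  have hinv : EqOn (slashM k δ f) f UHP := fun w hw => by
    rw [slashInv_iff.1 hf δ hmem w hw, hχ, one_mul]
  calc slashM k γ f (z + N) = slashM k (γ * ModularGroup.T ^ (N : ℤ)) f z := by
        rw [slashM_mul k _ _ _ hz, slashM_T_zpow, Int.cast_natCast]
    _ = slashM k γ (slashM k δ f) z := by rw [← slashM_mul k _ _ _ hz, hδ, inv_mul_cancel_right]
    _ = slashM k γ f z := eqOn_slashM γ hinv hz

end Slash

/-! ### Growth at `i∞` -/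

local notation "I∞" => comap im atTop

section Growth

variable {F G φ : ℂ → ℂ} {U : Set ℂ} {τ : ℂ}

/-- At most polynomial growth in `im z` as `im z → ∞`, uniformly in `re z`. -/
def PolyGrowth (F : ℂ → ℂ) : Prop := ∃ n : ℕ, F =O[I∞] fun z => z.im ^ n

/-- At most polynomial growth in the sense of distributions: every mollification of `F` by a test
function has `PolyGrowth`. Unlike `PolyGrowth`, this notion is stable under differentiation. -/
def WeakPolyGrowth (F : ℂ → ℂ) : Prop :=
  ∀ φ : ℂ → ℂ, ContDiff ℝ ∞ φ → HasCompactSupport φ → PolyGrowth fun τ => ∫ z, φ z * F (τ + z)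

lemma eventually_lt_im (y : ℝ) : ∀ᶠ τ in I∞, y < τ.im :=
  tendsto_comap.eventually_gt_atTop y

lemma PolyGrowth.congr' (hF : PolyGrowth F) (h : F =ᶠ[I∞] G) : PolyGrowth G :=
  hF.imp fun _ hn => hn.congr' h .rfl

lemma PolyGrowth.mul (hF : PolyGrowth F) (hG : PolyGrowth G) :
    PolyGrowth fun z => F z * G z := by
  obtain ⟨⟨m, hm⟩, n, hn⟩ := And.intro hF hG
  exact ⟨m + n, by simpa only [pow_add] using hm.mul hn⟩

lemma PolyGrowth.add (hF : PolyGrowth F) (hG : PolyGrowth G) :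
    PolyGrowth fun z => F z + G z := by
  have hmono {i j : ℕ} (hij : i ≤ j) :
      (fun z : ℂ => z.im ^ i) =O[I∞] fun z : ℂ => z.im ^ j :=
    (Asymptotics.IsBigO.pow_of_le_right (l := atTop)
      ((eventually_ge_atTop (1 : ℝ)).mono fun _ h => h) hij).comp_tendsto tendsto_comap
  obtain ⟨⟨m, hm⟩, n, hn⟩ := And.intro hF hG
  exact ⟨max m n, (hm.trans (hmono (le_max_left m n))).add (hn.trans (hmono (le_max_right m n)))⟩

lemma polyGrowth_const (c : ℂ) : PolyGrowth fun _ => c :=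
  ⟨0, by simpa using Asymptotics.isBigO_const_const c (one_ne_zero (α := ℝ)) I∞⟩

lemma PolyGrowth.const_mul (c : ℂ) (hF : PolyGrowth F) : PolyGrowth fun z => c * F z :=
  (polyGrowth_const c).mul hF

lemma PolyGrowth.conj (hF : PolyGrowth F) : PolyGrowth fun z => conj (F z) :=
  hF.imp fun _ hn => .of_norm_left (by simpa only [norm_conj] using hn.norm_left)

lemma polyGrowth_of_norm_le_rpow {A C v₀ : ℝ}
    (h : ∀ z ∈ UHP, v₀ ≤ z.im → ‖F z‖ ≤ C * z.im ^ A) : PolyGrowth F := by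
  obtain ⟨n, hn⟩ := exists_nat_ge A
  refine ⟨n, .of_bound |C| ?_⟩
  filter_upwards [eventually_lt_im v₀, eventually_lt_im 1] with z hv h1
  have h0 : 0 < z.im := zero_lt_one.trans h1
  calc ‖F z‖ ≤ C * z.im ^ A := h z h0 hv.le
    _ ≤ |C| * z.im ^ (n : ℝ) := by gcongr; exacts [le_abs_self C, h1.le]
    _ = |C| * ‖z.im ^ n‖ := by rw [Real.rpow_natCast, Real.norm_of_nonneg (pow_nonneg h0.le n)]

lemma polyGrowth_im_zpow (m : ℤ) : PolyGrowth fun z => (z.im : ℂ) ^ m :=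
  polyGrowth_of_norm_le_rpow (A := m) (C := 1) (v₀ := 0) fun z hz _ => by
    rw [norm_zpow, norm_real, Real.norm_of_nonneg (le_of_lt hz), one_mul, Real.rpow_intCast]

lemma closedBall_subset_UHP {R : ℝ} (h : R < τ.im) : Metric.closedBall τ R ⊆ UHP := fun z hz => by
  have : |z.im - τ.im| ≤ R := (abs_im_le_norm (z - τ)).trans (mem_closedBall_iff_norm.1 hz)
  have : -R ≤ z.im - τ.im := (abs_le.1 this).1
  change 0 < z.im
  linarith

lemma eventually_add_mem_UHP (hφ : HasCompactSupport φ) :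
    ∀ᶠ τ in I∞, ∀ z ∈ tsupport φ, τ + z ∈ UHP := by
  obtain ⟨R, hR⟩ := hφ.isCompact.isBounded.subset_closedBall 0
  filter_upwards [eventually_lt_im R] with τ hτ z hz
  exact closedBall_subset_UHP hτ (by simpa using hR hz)

lemma PolyGrowth.exists_norm_comp_add_le (hF : PolyGrowth F) (R : ℝ) :
    ∃ (n : ℕ) (C : ℝ), ∀ᶠ τ in I∞, ∀ z, ‖z‖ ≤ R → ‖F (τ + z)‖ ≤ C * ‖τ.im ^ n‖ := by
  obtain ⟨n, hn⟩ := hF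
  obtain ⟨C, hC⟩ := hn.bound
  obtain ⟨v₀, -, hv₀⟩ := (atTop_basis.comap im).eventually_iff.1 hC
  refine ⟨n, |C| * 2 ^ n, ?_⟩
  filter_upwards [eventually_lt_im R, eventually_lt_im (v₀ + R), eventually_lt_im 0]
    with τ hτR hτv hτ0 z hz
  obtain ⟨him₁, him₂⟩ := abs_le.1 ((abs_im_le_norm z).trans hz)
  have hv : v₀ ≤ (τ + z).im := by rw [add_im]; linarith
  have hpos : 0 ≤ (τ + z).im := by rw [add_im]; linarith
  have hle : (τ + z).im ≤ 2 * τ.im := by rw [add_im]; linarith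
  calc ‖F (τ + z)‖ ≤ C * ‖(τ + z).im ^ n‖ := hv₀ hv
    _ ≤ |C| * (2 * τ.im) ^ n := by
        rw [Real.norm_of_nonneg (pow_nonneg hpos n)]
        gcongr
        exact le_abs_self C
    _ = |C| * 2 ^ n * ‖τ.im ^ n‖ := by
        rw [Real.norm_of_nonneg (pow_nonneg hτ0.le n), mul_pow, mul_assoc]

lemma PolyGrowth.weakPolyGrowth (hF : PolyGrowth F) : WeakPolyGrowth F := by
  intro φ hφ hφc
  obtain ⟨R, hR⟩ := hφc.isCompact.isBounded.subset_closedBall 0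
  obtain ⟨n, C, hC⟩ := hF.exists_norm_comp_add_le R
  refine ⟨n, .of_bound (∫ z, ‖φ z‖ * C) ?_⟩
  filter_upwards [hC] with τ hτ
  have hbound (z : ℂ) : ‖φ z * F (τ + z)‖ ≤ ‖φ z‖ * C * ‖τ.im ^ n‖ := by
    by_cases hz : z ∈ tsupport φ
    · rw [norm_mul, mul_assoc]
      gcongr
      exact hτ z (mem_closedBall_zero_iff.1 (hR hz))
    · simp [image_eq_zero_of_notMem_tsupport hz]
  have hint : Integrable fun z => ‖φ z‖ := (hφ.continuous.integrable_of_hasCompactSupport hφc).norm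
  calc ‖∫ z, φ z * F (τ + z)‖ ≤ ∫ z, ‖φ z‖ * C * ‖τ.im ^ n‖ :=
        norm_integral_le_of_norm_le ((hint.mul_const _).mul_const _) (.of_forall hbound)
    _ = (∫ z, ‖φ z‖ * C) * ‖τ.im ^ n‖ := integral_mul_const _ _

lemma continuous_mul_comp_add (hU : IsOpen U) (hφ : Continuous φ) (hF : ContinuousOn F U)
    (hτ : ∀ z ∈ tsupport φ, τ + z ∈ U) : Continuous fun z => φ z * F (τ + z) :=
  continuous_of_tsupport fun z hz =>
    have hFz : ContinuousAt F (τ + z) :=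
      hF.continuousAt (hU.mem_nhds (hτ z (tsupport_mul_subset_left hz)))
    hφ.continuousAt.mul (hFz.comp (continuous_const_add τ).continuousAt)

lemma integrable_mul_comp_add (hU : IsOpen U) (hφ : Continuous φ) (hφc : HasCompactSupport φ)
    (hF : ContinuousOn F U) (hτ : ∀ z ∈ tsupport φ, τ + z ∈ U) :
    Integrable fun z => φ z * F (τ + z) :=
  (continuous_mul_comp_add hU hφ hF hτ).integrable_of_hasCompactSupport hφc.mul_right

lemma integrable_fderiv_mul_comp_add (hU : IsOpen U) (hφ : ContDiff ℝ ∞ φ)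
    (hφc : HasCompactSupport φ) (hF : ContinuousOn F U) (hτ : ∀ z ∈ tsupport φ, τ + z ∈ U)
    (v : ℂ) : Integrable fun z => fderiv ℝ φ z v * F (τ + z) := by
  have hcont : Continuous fun z => fderiv ℝ φ z v :=
    (contDiffOn_univ.1 (contDiffOn_fderiv_apply isOpen_univ hφ.contDiffOn v)).continuous
  have hsupp : (tsupport fun z => fderiv ℝ φ z v) ⊆ tsupport φ := tsupport_fderiv_apply_subset ℝ v
  exact integrable_mul_comp_add hU hcont (hφc.of_isClosed_subset (isClosed_tsupport _) hsupp) hF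
    fun z hz => hτ z (hsupp hz)

lemma integrable_mul_fderiv_comp_add (hU : IsOpen U) (hφ : ContDiff ℝ ∞ φ)
    (hφc : HasCompactSupport φ) (hF : ContDiffOn ℝ ∞ F U) (hτ : ∀ z ∈ tsupport φ, τ + z ∈ U)
    (v : ℂ) : Integrable fun z => φ z * fderiv ℝ F (τ + z) v :=
  integrable_mul_comp_add (F := fun z => fderiv ℝ F z v) hU hφ.continuous hφc
    (contDiffOn_fderiv_apply hU hF v).continuousOn hτ

lemma integral_mul_fderiv_comp_add (hU : IsOpen U) (hφ : ContDiff ℝ ∞ φ)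
    (hφc : HasCompactSupport φ) (hF : ContDiffOn ℝ ∞ F U) (hτ : ∀ z ∈ tsupport φ, τ + z ∈ U)
    (v : ℂ) : ∫ z, φ z * fderiv ℝ F (τ + z) v = -∫ z, fderiv ℝ φ z v * F (τ + z) := by
  have hderiv : Integrable fun z => φ z * fderiv ℝ (fun w => F (τ + w)) z v := by
    simpa only [fderiv_comp_add_left] using integrable_mul_fderiv_comp_add hU hφ hφc hF hτ v
  have hdiff (z : ℂ) (hz : z ∈ tsupport φ) : DifferentiableAt ℝ (fun w => F (τ + w)) z :=
    (differentiableAt_of_contDiffOn hU hF (hτ z hz)).comp z (differentiableAt_id.const_add τ)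
  have hparts := integral_mul_fderiv_eq_neg_fderiv_mul_of_integrable
    (integrable_fderiv_mul_comp_add hU hφ hφc hF.continuousOn hτ v) hderiv
    (integrable_mul_comp_add hU hφ.continuous hφc hF.continuousOn hτ)
    (fun z _ => hφ.differentiable (by simp) z) hdiff
  simpa only [fderiv_comp_add_left] using hparts

lemma tsupport_wirt_subset (φ : ℂ → ℂ) : tsupport (wirt φ) ⊆ tsupport φ := by
  refine closure_minimal (fun z hz => ?_) (isClosed_tsupport φ)
  contrapose! hz
  have h : fderiv ℝ φ z = 0 :=
    image_eq_zero_of_notMem_tsupport fun h => hz (tsupport_fderiv_subset ℝ h)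
  simp [wirt, pdU, pdV, h]

lemma integral_mul_wirt_comp_add (hU : IsOpen U) (hφ : ContDiff ℝ ∞ φ)
    (hφc : HasCompactSupport φ) (hF : ContDiffOn ℝ ∞ F U) (hτ : ∀ z ∈ tsupport φ, τ + z ∈ U) :
    ∫ z, φ z * wirt F (τ + z) = -∫ z, wirt φ z * F (τ + z) := by
  have hint := integrable_mul_fderiv_comp_add hU hφ hφc hF hτ
  have hint' := integrable_fderiv_mul_comp_add hU hφ hφc hF.continuousOn hτ
  have hF' (z : ℂ) : φ z * wirt F (τ + z) =
      1 / 2 * (φ z * fderiv ℝ F (τ + z) 1) - I / 2 * (φ z * fderiv ℝ F (τ + z) I) := by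
    rw [wirt, pdU, pdV]; ring
  have hφ' (z : ℂ) : wirt φ z * F (τ + z) =
      1 / 2 * (fderiv ℝ φ z 1 * F (τ + z)) - I / 2 * (fderiv ℝ φ z I * F (τ + z)) := by
    rw [wirt, pdU, pdV]; ring
  simp only [hF', hφ']
  rw [integral_sub ((hint 1).const_mul _) ((hint I).const_mul _),
    integral_sub ((hint' 1).const_mul _) ((hint' I).const_mul _)]
  simp only [integral_const_mul, integral_mul_fderiv_comp_add hU hφ hφc hF hτ]
  ring

lemma WeakPolyGrowth.wirt (hF : WeakPolyGrowth F) (hsm : ContDiffOn ℝ ∞ F UHP) :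
    WeakPolyGrowth (wirt F) := by
  intro φ hφ hφc
  have hφ' : ContDiff ℝ ∞ (_root_.wirt φ) :=
    contDiffOn_univ.1 (contDiffOn_wirt isOpen_univ hφ.contDiffOn)
  have hφc' : HasCompactSupport (_root_.wirt φ) :=
    hφc.of_isClosed_subset (isClosed_tsupport _) (tsupport_wirt_subset φ)
  refine ((hF _ hφ' hφc').const_mul (-1)).congr' ?_
  filter_upwards [eventually_add_mem_UHP hφc] with τ hτ
  rw [integral_mul_wirt_comp_add isOpen_UHP hφ hφc hsm hτ, neg_one_mul]

lemma WeakPolyGrowth.iterate_wirt (hF : WeakPolyGrowth F) (hsm : ContDiffOn ℝ ∞ F UHP) (n : ℕ) :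
    WeakPolyGrowth (_root_.wirt^[n] F) := by
  induction n with
  | zero => exact hF
  | succ n ih =>
    rw [Function.iterate_succ_apply']
    exact ih.wirt (contDiffOn_iterate_wirt isOpen_UHP hsm n)

lemma WeakPolyGrowth.add (hF : WeakPolyGrowth F) (hG : WeakPolyGrowth G)
    (hFc : ContinuousOn F UHP) (hGc : ContinuousOn G UHP) :
    WeakPolyGrowth fun z => F z + G z := by
  intro φ hφ hφc
  refine ((hF φ hφ hφc).add (hG φ hφ hφc)).congr' ?_
  filter_upwards [eventually_add_mem_UHP hφc] with τ hτ
  simp only [mul_add]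
  rw [integral_add (integrable_mul_comp_add isOpen_UHP hφ.continuous hφc hFc hτ)
    (integrable_mul_comp_add isOpen_UHP hφ.continuous hφc hGc hτ)]

lemma WeakPolyGrowth.congr (hF : WeakPolyGrowth F) (h : EqOn F G UHP) : WeakPolyGrowth G := by
  intro φ hφ hφc
  refine (hF φ hφ hφc).congr' ?_
  filter_upwards [eventually_add_mem_UHP hφc] with τ hτ
  refine integral_congr_ae (.of_forall fun z => ?_)
  by_cases hz : z ∈ tsupport φ
  · simp only [h (hτ z hz)]
  · simp [image_eq_zero_of_notMem_tsupport hz]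

end Growth

section RadialMean

variable {h φ : ℂ → ℂ} {U : Set ℂ} {τ : ℂ}

lemma measurePreserving_mul_left_of_norm_eq_one {w : ℂ} (hw : ‖w‖ = 1) :
    MeasurePreserving (MeasurableEquiv.mulLeft₀ w (norm_ne_zero_iff.1 (hw ▸ one_ne_zero))) :=
  (rotation ⟨w, mem_sphere_zero_iff_norm.2 hw⟩).measurePreserving

lemma integral_circleAverage_mul (hφ : Continuous φ) (hφi : Integrable φ) :
    ∫ z, Real.circleAverage (fun w => φ (w * z)) 0 1 = ∫ z, φ z := by
  have hrot (θ : ℝ) := measurePreserving_mul_left_of_norm_eq_one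
    (w := circleMap 0 1 θ) (by rw [norm_circleMap_zero, abs_one])
  have hcont : Continuous fun p : ℝ × ℂ => φ (circleMap 0 1 p.1 * p.2) := by fun_prop
  have hnorm (θ : ℝ) : ∫ z, ‖φ (circleMap 0 1 θ * z)‖ = ∫ z, ‖φ z‖ :=
    (hrot θ).integral_comp' fun z => ‖φ z‖
  have hint : Integrable (Function.uncurry fun θ z => φ (circleMap 0 1 θ * z))
      ((volume.restrict (uIoc 0 (2 * Real.pi))).prod volume) := by
    refine (integrable_prod_iff hcont.aestronglyMeasurable).2 ⟨.of_forall fun θ => ?_, ?_⟩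
    · exact (hrot θ).integrable_comp_of_integrable hφi
    · simp only [hnorm]
      exact intervalIntegrable_iff.1 intervalIntegrable_const
  calc ∫ z, Real.circleAverage (fun w => φ (w * z)) 0 1
      = (2 * Real.pi)⁻¹ • ∫ θ in 0..2 * Real.pi, ∫ z, φ (circleMap 0 1 θ * z) := by
        simp only [Real.circleAverage_def]
        rw [integral_smul, intervalIntegral_integral_swap hint]
    _ = (2 * Real.pi)⁻¹ • ∫ _ in 0..2 * Real.pi, ∫ z, φ z := by
        congr 2 with θ
        exact (hrot θ).integral_comp' φ
    _ = ∫ z, φ z := by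
        rw [intervalIntegral.integral_const, sub_zero, inv_smul_smul₀ Real.two_pi_pos.ne']

lemma circleAverage_comp_add_mul (hU : IsOpen U) (hh : DifferentiableOn ℂ h U) {R : ℝ}
    (hτ : Metric.closedBall τ R ⊆ U) {z : ℂ} (hz : ‖z‖ ≤ R) :
    Real.circleAverage (fun w => h (τ + w * z)) 0 1 = h τ := by
  have hmem (w : ℂ) (hw : w ∈ Metric.closedBall 0 1) : τ + w * z ∈ U := by
    refine hτ (mem_closedBall_iff_norm.2 ?_)
    rw [add_sub_cancel_left, norm_mul]
    exact (mul_le_of_le_one_left (norm_nonneg z) (mem_closedBall_zero_iff.1 hw)).trans hz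
  have hdiff (w : ℂ) (hw : w ∈ Metric.closedBall 0 1) :
      DifferentiableAt ℂ (fun w => h (τ + w * z)) w :=
    (hh.differentiableAt (hU.mem_nhds (hmem w hw))).comp w (by fun_prop)
  simpa only [zero_mul, add_zero] using circleAverage_of_differentiable_on_off_countable
    countable_empty (f := fun w => h (τ + w * z)) (c := 0) (R := 1)
    (fun w hw => (hdiff w (abs_one (α := ℝ) ▸ hw)).continuousAt.continuousWithinAt)
    (fun w hw => hdiff w (abs_one (α := ℝ) ▸ Metric.ball_subset_closedBall hw.1))

lemma integral_radial_mul_comp_add (hU : IsOpen U) (hh : DifferentiableOn ℂ h U) {R : ℝ}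
    (hτ : Metric.closedBall τ R ⊆ U) (hφ : Continuous φ)
    (hφR : tsupport φ ⊆ Metric.closedBall 0 R) (hrad : ∀ w z, ‖w‖ = 1 → φ (w * z) = φ z) :
    ∫ z, φ z * h (τ + z) = (∫ z, φ z) * h τ := by
  have hφc : HasCompactSupport φ :=
    (isCompact_closedBall 0 R).of_isClosed_subset (isClosed_tsupport φ) hφR
  have hmem (z : ℂ) (hz : z ∈ tsupport φ) : τ + z ∈ U :=
    hτ (by simpa using hφR hz)
  have havg (z : ℂ) :
      Real.circleAverage (fun w => φ (w * z) * h (τ + w * z)) 0 1 = φ z * h τ := by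
    have hsphere : EqOn (fun w => φ (w * z) * h (τ + w * z)) (fun w => φ z • h (τ + w * z))
        (Metric.sphere 0 |1|) := fun w hw => by
      simp only [hrad w z (by simpa using hw), smul_eq_mul]
    rw [Real.circleAverage_congr_sphere hsphere, Real.circleAverage_fun_smul, smul_eq_mul]
    by_cases hz : z ∈ tsupport φ
    · rw [circleAverage_comp_add_mul hU hh hτ (mem_closedBall_zero_iff.1 (hφR hz))]
    · rw [image_eq_zero_of_notMem_tsupport hz, zero_mul, zero_mul]
  rw [← integral_circleAverage_mul (continuous_mul_comp_add hU hφ hh.continuousOn hmem)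
    (integrable_mul_comp_add hU hφ hφc hh.continuousOn hmem)]
  simp only [havg, integral_mul_const]

/-- A radial smooth function supported in the unit disc, used as a test function. -/
def radialBump (z : ℂ) : ℝ := expNegInvGlue (1 - ‖z‖ ^ 2)

lemma contDiff_radialBump : ContDiff ℝ ∞ radialBump :=
  expNegInvGlue.contDiff.comp (contDiff_const.sub (contDiff_norm_sq ℝ))

lemma tsupport_radialBump_subset : tsupport radialBump ⊆ Metric.closedBall 0 1 := by
  refine closure_minimal (fun z hz => ?_) Metric.isClosed_closedBall
  contrapose! hz
  rw [mem_closedBall_zero_iff, not_le] at hz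
  exact Function.notMem_support.2 (expNegInvGlue.zero_of_nonpos (by nlinarith))

lemma hasCompactSupport_radialBump : HasCompactSupport radialBump :=
  (isCompact_closedBall 0 1).of_isClosed_subset (isClosed_tsupport _) tsupport_radialBump_subset

lemma integral_radialBump_pos : 0 < ∫ z, radialBump z :=
  contDiff_radialBump.continuous.integral_pos_of_hasCompactSupport_nonneg_nonzero (x := 0)
    hasCompactSupport_radialBump (fun _ => expNegInvGlue.nonneg _)
    (expNegInvGlue.pos_of_pos (by simp)).ne'

lemma WeakPolyGrowth.polyGrowth (hw : WeakPolyGrowth h) (hh : DifferentiableOn ℂ h UHP) :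
    PolyGrowth h := by
  let φ : ℂ → ℂ := fun z => (radialBump z : ℂ)
  have hφ : ContDiff ℝ ∞ φ := ofRealCLM.contDiff.comp contDiff_radialBump
  have hsupp : tsupport φ ⊆ Metric.closedBall 0 1 :=
    (tsupport_comp_subset ofReal_zero radialBump).trans tsupport_radialBump_subset
  have hrad (w z : ℂ) (hw : ‖w‖ = 1) : φ (w * z) = φ z := by
    simp only [φ, radialBump, norm_mul, hw, one_mul]
  have hφ0 : ∫ z, φ z ≠ 0 :=
    integral_ofReal.trans_ne (ofReal_ne_zero.2 integral_radialBump_pos.ne')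
  refine ((hw φ hφ (hasCompactSupport_radialBump.comp_left ofReal_zero)).const_mul
    (∫ z, φ z)⁻¹).congr' ?_
  filter_upwards [eventually_lt_im 1] with τ hτ
  rw [integral_radial_mul_comp_add isOpen_UHP hh (closedBall_subset_UHP hτ) hφ.continuous hsupp
    hrad, inv_mul_cancel_left₀ hφ0]

end RadialMean

section Periodic

open Function.Periodic (qParam norm_qParam qParam_ne_zero differentiable_qParam)

variable {g : ℂ → ℂ} {h : ℝ}

lemma add_ofReal_mem_UHP_iff {z : ℂ} {x : ℝ} : z + x ∈ UHP ↔ z ∈ UHP := by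
  simp [UHP]

lemma periodic_qParam (hh : h ≠ 0) : Function.Periodic (qParam h) h := fun z => by
  rw [qParam, qParam, mul_add, add_div, mul_div_cancel_right₀ _ (ofReal_ne_zero.2 hh),
    exp_periodic]

lemma PolyGrowth.tendsto_qParam_mul (hh : 0 < h) (hp : PolyGrowth g) :
    Tendsto (fun z => qParam h z * g z) I∞ (𝓝 0) := by
  obtain ⟨n, hn⟩ := hp
  have hexp : (fun z : ℂ => z.im ^ n) =o[I∞] fun z : ℂ => Real.exp (2 * Real.pi / h * z.im) :=
    (isLittleO_pow_exp_pos_mul_atTop n (by positivity)).comp_tendsto tendsto_comap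
  have hone (z : ℂ) : ‖qParam h z‖ * Real.exp (2 * Real.pi / h * z.im) = 1 := by
    rw [norm_qParam, ← Real.exp_add, ← Real.exp_zero]
    ring_nf
  have hlim := (Asymptotics.isBigO_refl (qParam h) I∞).norm_right.mul_isLittleO
    (hn.trans_isLittleO hexp)
  simp only [hone] at hlim
  exact (Asymptotics.isLittleO_one_iff ℝ).1 hlim

lemma PolyGrowth.isBigO_one_of_periodic (hh : 0 < h) (hd : DifferentiableOn ℂ g UHP)
    (hper : ∀ z ∈ UHP, g (z + h) = g z) (hp : PolyGrowth g) : g =O[I∞] fun _ => (1 : ℝ) := by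
  let P : ℂ → ℂ := UHP.indicator fun z => qParam h z * g z
  have hP : P =ᶠ[I∞] fun z => qParam h z * g z := by
    filter_upwards [eventually_lt_im 0] with z hz using indicator_of_mem (s := UHP) hz _
  have hPper : Function.Periodic P h := fun z => by
    by_cases hz : z ∈ UHP
    · simp only [P, indicator_of_mem, add_ofReal_mem_UHP_iff, hz, hper z hz,
        periodic_qParam hh.ne' z]
    · simp only [P, indicator_of_notMem, add_ofReal_mem_UHP_iff, hz, not_false_eq_true]
  have hPd : ∀ᶠ z in I∞, DifferentiableAt ℂ P z := by
    filter_upwards [eventually_lt_im 0] with z hz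
    have hU : UHP ∈ 𝓝 z := isOpen_UHP.mem_nhds hz
    exact ((differentiable_qParam z).mul (hd.differentiableAt hU)).congr_of_eventuallyEq
      (eqOn_indicator.eventuallyEq_of_mem hU)
  have hdecay : (fun z => qParam h z * g z) =O[I∞] fun z => ‖qParam h z‖ := by
    simp only [norm_qParam]
    exact (Function.Periodic.exp_decay_of_zero_at_inf hh hPper hPd
      ((hp.tendsto_qParam_mul hh).congr' hP.symm)).congr' hP .rfl
  have hmul := (Asymptotics.isBigO_refl (fun z => (qParam h z)⁻¹) I∞).norm_right.mul hdecay
  simpa only [inv_mul_cancel_left₀ (qParam_ne_zero _), norm_inv,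
    inv_mul_cancel₀ (norm_ne_zero_iff.2 (qParam_ne_zero _))] using hmul

end Periodic

/-! ### Modularity -/

section Modular

variable {f g F : ℂ → ℂ} {k : ℤ} {N : ℕ} {χ : DirichletCharacter ℂ N}

lemma isBigO_one_iff_exists_forall_le : (F =O[I∞] fun _ => (1 : ℝ)) ↔
    ∃ C v₀ : ℝ, ∀ z ∈ UHP, v₀ ≤ z.im → ‖F z‖ ≤ C := by
  simp only [Asymptotics.isBigO_iff, norm_one, mul_one]
  refine exists_congr fun C => ⟨fun h => ?_, fun ⟨v₀, h⟩ => ?_⟩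
  · obtain ⟨v₀, -, h⟩ := (atTop_basis.comap im).eventually_iff.1 h
    exact ⟨v₀, fun z _ hz => h hz⟩
  · filter_upwards [eventually_lt_im v₀, eventually_lt_im 0] with z hv h0 using h z h0 hv.le

lemma boundedAtCusps_iff : BoundedAtCusps k f ↔ ∀ γ, slashM k γ f =O[I∞] fun _ => (1 : ℝ) := by
  simp only [isBigO_one_iff_exists_forall_le]
  exact forall_SL2Z_iff

lemma PolyGrowthAtCusps.polyGrowth_slashM (hf : PolyGrowthAtCusps k f) (γ : SL2Z) :
    PolyGrowth (slashM k γ f) := by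
  obtain ⟨A, C, v₀, h⟩ := forall_SL2Z_iff.1 hf γ
  exact polyGrowth_of_norm_le_rpow h

lemma isHolomorphicModularForm_of_weakPolyGrowth (hN : 1 ≤ N) (hd : DifferentiableOn ℂ f UHP)
    (hinv : SlashInv k N χ f) (hw : ∀ γ, WeakPolyGrowth (slashM k γ f)) :
    IsHolomorphicModularForm k N χ f := by
  refine ⟨hd, hinv, boundedAtCusps_iff.2 fun γ => ?_⟩
  have hdγ := differentiableOn_slashM (k := k) γ hd
  refine ((hw γ).polyGrowth hdγ).isBigO_one_of_periodic (Nat.cast_pos.2 hN) hdγ fun z hz => ?_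
  rw [ofReal_natCast, slashM_add_natCast hinv γ hz]

lemma IsHolomorphicModularForm.const_mul (c : ℂ) (hf : IsHolomorphicModularForm k N χ f) :
    IsHolomorphicModularForm k N χ fun z => c * f z := by
  obtain ⟨hd, hinv, hb⟩ := hf
  refine ⟨hd.const_mul c, slashInv_iff.2 fun γ hγ z hz => ?_, boundedAtCusps_iff.2 fun γ => ?_⟩
  · rw [slashM_const_mul, slashInv_iff.1 hinv γ hγ z hz, mul_left_comm]
  · rw [funext (slashM_const_mul k γ c f)]
    exact (boundedAtCusps_iff.1 hb γ).const_mul_left c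

lemma IsHolomorphicModularForm.congr (hf : IsHolomorphicModularForm k N χ f)
    (h : EqOn g f UHP) : IsHolomorphicModularForm k N χ g := by
  obtain ⟨hd, hinv, hb⟩ := hf
  refine ⟨hd.congr h, slashInv_iff.2 fun γ hγ z hz => ?_, boundedAtCusps_iff.2 fun γ => ?_⟩
  · rw [eqOn_slashM γ h hz, h hz, slashInv_iff.1 hinv γ hγ z hz]
  · refine (boundedAtCusps_iff.1 hb γ).congr' ?_ .rfl
    filter_upwards [eventually_lt_im 0] with z hz using (eqOn_slashM γ h hz).symm

lemma SlashInv.xiOp (hinv : SlashInv k N χ f) (hf : ContDiffOn ℝ ∞ f UHP) :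
    SlashInv (2 - k) N (conjChar χ) (xiOp k f) := slashInv_iff.2 fun γ hγ z hz => by
  rw [← xiOp_slashM γ hf hz, eqOn_xiOp (slashInv_iff.1 hinv γ hγ) hz, xiOp_const_mul _ hf hz]
  rfl

lemma SlashInv.iterate_wirt {n : ℕ} (hinv : SlashInv (-n) N χ f) (hf : ContDiffOn ℝ ∞ f UHP) :
    SlashInv (2 + n) N χ (wirt^[n + 1] f) := slashInv_iff.2 fun γ hγ z hz => by
  rw [← iterate_wirt_slashM γ hf n hz,
    eqOn_iterate_wirt isOpen_UHP (slashInv_iff.1 hinv γ hγ) _ hz,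
    iterate_wirt_const_mul isOpen_UHP hf _ _ hz]

lemma xiOp_eq_wirt_add (k : ℤ) (hF : ContDiffOn ℝ ∞ F UHP) :
    EqOn (fun z => wirt (fun w => 2 * I * ((w.im : ℂ) ^ k * conj (F w))) z +
      -k * ((z.im : ℂ) ^ (k - 1) * conj (F z))) (xiOp k F) UHP := fun z hz => by
  have hFz := differentiableAt_of_contDiffOn isOpen_UHP hF hz
  have hconj : DifferentiableAt ℝ (fun w => conj (F w)) z := conjCLE.differentiableAt.comp z hFz
  have hpow := differentiableAt_of_contDiffOn isOpen_UHP (contDiffOn_im_zpow k) hz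
  simp only [xiOp]
  rw [wirt_const_mul _ (hpow.fun_mul hconj), wirt_mul hpow hconj,
    wirt_im_zpow k (ne_of_gt hz), wirt_conj hFz]
  linear_combination -(k * (z.im : ℂ) ^ (k - 1) * conj (F z)) * I_sq

lemma PolyGrowth.weakPolyGrowth_xiOp (hg : PolyGrowth F) (k : ℤ) (hF : ContDiffOn ℝ ∞ F UHP) :
    WeakPolyGrowth (xiOp k F) := by
  have hgrowth (c : ℂ) (m : ℤ) :
      WeakPolyGrowth fun z => c * ((z.im : ℂ) ^ m * conj (F z)) :=
    (((polyGrowth_im_zpow m).mul hg.conj).const_mul c).weakPolyGrowth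
  have hsmooth (c : ℂ) (m : ℤ) :
      ContDiffOn ℝ ∞ (fun z : ℂ => c * ((z.im : ℂ) ^ m * conj (F z))) UHP :=
    contDiffOn_const.mul ((contDiffOn_im_zpow m).mul (conjCLE.contDiff.comp_contDiffOn hF))
  exact (((hgrowth _ k).wirt (hsmooth _ k)).add (hgrowth _ (k - 1))
    (contDiffOn_wirt isOpen_UHP (hsmooth _ k)).continuousOn
    (hsmooth _ (k - 1)).continuousOn).congr (xiOp_eq_wirt_add k hF)

lemma IsHMFPolyGrowth.isHolomorphicModularForm_xiOp (hN : 1 ≤ N) (hf : IsHMFPolyGrowth k N χ f) :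
    IsHolomorphicModularForm (2 - k) N (conjChar χ) (xiOp k f) := by
  obtain ⟨⟨hsm, hinv, hΔ, -⟩, hpoly⟩ := hf
  exact isHolomorphicModularForm_of_weakPolyGrowth hN (differentiableOn_xiOp_of_harmonic hsm hΔ)
    (hinv.xiOp hsm) fun γ =>
      ((hpoly.polyGrowth_slashM γ).weakPolyGrowth_xiOp k (contDiffOn_slashM γ hsm)).congr
        (xiOp_slashM γ hsm)

lemma IsHMFPolyGrowth.isHolomorphicModularForm_iterate_wirt {n : ℕ} (hN : 1 ≤ N)
    (hf : IsHMFPolyGrowth (-n) N χ f) :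
    IsHolomorphicModularForm (2 + n) N χ (wirt^[n + 1] f) := by
  obtain ⟨⟨hsm, hinv, hΔ, -⟩, hpoly⟩ := hf
  exact isHolomorphicModularForm_of_weakPolyGrowth hN
    (differentiableOn_iterate_wirt_of_harmonic hsm hΔ) (hinv.iterate_wirt hsm) fun γ =>
      ((hpoly.polyGrowth_slashM γ).weakPolyGrowth.iterate_wirt (contDiffOn_slashM γ hsm) _).congr
        (iterate_wirt_slashM γ hsm n)

lemma iterate_Dop_eqOn (hF : ContDiffOn ℝ ∞ F UHP) (n : ℕ) :
    EqOn (Dop^[n] F) (fun z => (2 * Real.pi * I)⁻¹ ^ n * wirt^[n] F z) UHP := by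
  induction n with
  | zero => simp [EqOn]
  | succ n ih =>
    intro z hz
    have hd : DifferentiableAt ℝ (wirt^[n] F) z :=
      differentiableAt_of_contDiffOn isOpen_UHP (contDiffOn_iterate_wirt isOpen_UHP hF n) hz
    rw [Function.iterate_succ_apply', Dop, eqOn_wirt isOpen_UHP ih hz, wirt_const_mul _ hd]
    simp only [Function.iterate_succ_apply']
    ring

lemma IsHMFPolyGrowth.isHolomorphicModularForm_iterate_Dop {n : ℕ} (hN : 1 ≤ N)
    (hf : IsHMFPolyGrowth (-n) N χ f) :
    IsHolomorphicModularForm (2 + n) N χ (Dop^[n + 1] f) :=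
  ((hf.isHolomorphicModularForm_iterate_wirt hN).const_mul _).congr (iterate_Dop_eqOn hf.1.1 _)

end Modular

theorem shadow_and_bol_to_modular_general
    (k : ℤ) (N : ℕ) (hN : 1 ≤ N) (χ : DirichletCharacter ℂ N) (f : ℂ → ℂ)
    (hf : IsHMFPolyGrowth k N χ f) :
    IsHolomorphicModularForm (2 - k) N (conjChar χ) (fun τ => xiOp k f τ) ∧
      (k ≤ 0 → IsHolomorphicModularForm (2 - k) N χ (Dop^[(1 - k).toNat] f)) := by
  refine ⟨hf.isHolomorphicModularForm_xiOp hN, fun hk => ?_⟩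
  obtain ⟨n, rfl⟩ : ∃ n : ℕ, k = -(n : ℤ) := ⟨(-k).toNat, by omega⟩
  have horder : (1 - -(n : ℤ)).toNat = n + 1 := by omega
  rw [horder, sub_neg_eq_add]
  exact hf.isHolomorphicModularForm_iterate_Dop hN

/-- **Shadow and Bol operators send `H^#` to holomorphic modular forms**
(Proposition 3.1 (ii),(iii)): for `f ∈ H^#_k(N,χ)` with `k ≠ 1`,
`ξ_k(f) ∈ M_{2-k}(N,χ̄)`, and if `k ≤ 0` then `D^{1-k}(f) ∈ M_{2-k}(N,χ)`. -/
theorem shadow_and_bol_to_modular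
    (k : ℤ) (hk : k ≠ 1) (N : ℕ) (hN : 1 ≤ N)
    (χ : DirichletCharacter ℂ N) (f : ℂ → ℂ)
    (hf : IsHMFPolyGrowth k N χ f) :
    IsHolomorphicModularForm (2 - k) N (conjChar χ) (fun τ => xiOp k f τ) ∧
      (k ≤ 0 → IsHolomorphicModularForm (2 - k) N χ (Dop^[(1 - k).toNat] f)) :=
  shadow_and_bol_to_modular_general k N hN χ f hf
end
end

section
/- Analyticity and Mellin inversion for W_ν. For any real ν > 0, the function W_ν(s) = ∫₀^∞ Γ(ν,2x) e^{x} x^{s−1} dx is an analytic function of s on the half-plane Re(s) > 0. Moreover, for any x > 0 and σ > 0, the Mellin inversion formula holds: Γ(ν,2x) e^{x} = (1/(2πi)) ∫_{σ−i∞}^{σ+i∞} x^{−s} W_ν(s) ds. -/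
open Complex MeasureTheory Set Filter

noncomputable section

/-!
Put `h x = Γ(ν, 2x) eˣ`. For `x ≤ t`, `a ≥ 0` and `0 ≤ c < 1` one has
`e⁻ᵗ t^(ν-1) ≤ e^(-cx) x⁻ᵃ · t^(ν+a-1) e^(-(1-c)t)`, so `h` is `O(e^(-x/2))` at infinity and
`O(x⁻ᵃ)` at the origin for every `a ≥ 0` with `ν + a > 0`; hence its Mellin transform converges and
is holomorphic for `Re s > max 0 (-ν)`.

Inversion needs integrability of the transform on vertical lines. Substituting `x = eᵘ` turns the
Mellin transform into an integral over `ℝ`, where integrating by parts twice leaves no boundary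
terms and gives `ℳ[h''](s + 2) = s (s + 1) ℳ[h](s)`. As `h' = h - 2^ν e⁻ˣ x^(ν-1)` and
`h'' = h - 2^ν (ν - 1) e⁻ˣ x^(ν-2)`, the left-hand side converges and is bounded on each vertical
line, so `ℳ[h]` decays quadratically there.
-/

section MellinTransform

variable {E : Type*} [NormedAddCommGroup E] [NormedSpace ℂ E] {f f' f'' : ℝ → E} {s : ℂ}

lemma exp_smul_exp_cpow_sub_one_smul (s : ℂ) (u : ℝ) (v : E) :
    Real.exp u • ((Real.exp u : ℂ) ^ (s - 1) • v) = cexp (s * u) • v := by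
  have hexp : (Real.exp u : ℂ) ≠ 0 := ofReal_ne_zero.mpr (Real.exp_ne_zero u)
  rw [← Complex.coe_smul, smul_smul, cpow_sub _ _ hexp, cpow_one, mul_div_cancel₀ _ hexp,
    cpow_def_of_ne_zero hexp, ← ofReal_log (Real.exp_pos u).le, Real.log_exp, mul_comm]

lemma mellinConvergent_iff_integrable_comp_exp :
    MellinConvergent f s ↔ Integrable fun u : ℝ ↦ cexp (s * u) • f (Real.exp u) := by
  rw [MellinConvergent, ← Real.range_exp, ← image_univ,
    integrableOn_image_iff_integrableOn_abs_deriv_smul MeasurableSet.univ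
      (fun u _ ↦ (Real.hasDerivAt_exp u).hasDerivWithinAt) Real.exp_injective.injOn]
  simp only [Real.abs_exp, exp_smul_exp_cpow_sub_one_smul, integrableOn_univ]

lemma mellin_eq_integral_comp_exp (f : ℝ → E) (s : ℂ) :
    mellin f s = ∫ u : ℝ, cexp (s * u) • f (Real.exp u) := by
  rw [mellin, ← Real.range_exp, ← image_univ,
    integral_image_eq_integral_abs_deriv_smul MeasurableSet.univ
      (fun u _ ↦ (Real.hasDerivAt_exp u).hasDerivWithinAt) Real.exp_injective.injOn]
  simp only [Real.abs_exp, exp_smul_exp_cpow_sub_one_smul, Measure.restrict_univ]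

lemma norm_cexp_mul_ofReal_smul (s : ℂ) (u : ℝ) (v : E) :
    ‖cexp (s * u) • v‖ = Real.exp (s.re * u) * ‖v‖ := by
  rw [norm_smul, norm_exp, re_mul_ofReal]

lemma norm_mellin_le (f : ℝ → E) (s : ℂ) :
    ‖mellin f s‖ ≤ ∫ u : ℝ, Real.exp (s.re * u) * ‖f (Real.exp u)‖ := by
  rw [mellin_eq_integral_comp_exp]
  refine (norm_integral_le_integral_norm _).trans_eq ?_
  simp only [norm_cexp_mul_ofReal_smul]

lemma mellinConvergent_of_re_eq {z : ℂ} (hf : MellinConvergent f z) (h : s.re = z.re) :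
    MellinConvergent f s := by
  rw [mellinConvergent_iff_integrable_comp_exp] at hf ⊢
  have hmul : (fun u : ℝ ↦ cexp (s * u) • f (Real.exp u)) =
      fun u : ℝ ↦ cexp ((s - z) * u) • (cexp (z * u) • f (Real.exp u)) := by
    ext u
    rw [smul_smul, ← Complex.exp_add, ← add_mul, sub_add_cancel]
  refine hf.mono ?_ (ae_of_all _ fun u ↦ ?_)
  · rw [hmul]
    exact (Continuous.aestronglyMeasurable (by fun_prop)).smul hf.aestronglyMeasurable
  · rw [norm_cexp_mul_ofReal_smul, norm_cexp_mul_ofReal_smul, h]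

lemma continuous_mellin_vertical {σ : ℝ} (hf : MellinConvergent f σ) :
    Continuous fun t : ℝ ↦ mellin f (σ + t * I) := by
  have hconv (t : ℝ) : MellinConvergent f (σ + t * I) :=
    mellinConvergent_of_re_eq hf (by simp)
  simp only [mellin_eq_integral_comp_exp]
  refine continuous_of_dominated (bound := fun u ↦ ‖cexp (σ * u) • f (Real.exp u)‖)
    (fun t ↦ (mellinConvergent_iff_integrable_comp_exp.mp (hconv t)).aestronglyMeasurable)
    (fun t ↦ ae_of_all _ fun u ↦ ?_) (mellinConvergent_iff_integrable_comp_exp.mp hf).norm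
    (ae_of_all _ fun u ↦ by fun_prop)
  simp [norm_cexp_mul_ofReal_smul]

lemma mellin_add_one_of_hasDerivAt (hf : ∀ x, 0 < x → HasDerivAt f (f' x) x)
    (hs : MellinConvergent f s) (hs' : MellinConvergent f' (s + 1)) :
    mellin f' (s + 1) = -(s • mellin f s) := by
  have hderiv (u : ℝ) : HasDerivAt (fun u : ℝ ↦ cexp (s * u) • f (Real.exp u))
      (s • (cexp (s * u) • f (Real.exp u)) + cexp ((s + 1) * u) • f' (Real.exp u)) u := by
    have hexp : HasDerivAt (fun u : ℝ ↦ cexp (s * u)) (cexp (s * u) * s) u := by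
      simpa using ((hasDerivAt_id (u : ℂ)).const_mul s).cexp.comp_ofReal
    refine (hexp.smul ((hf _ (Real.exp_pos u)).scomp u (Real.hasDerivAt_exp u))).congr_deriv ?_
    simp only [Function.comp_apply]
    rw [← Complex.coe_smul, smul_smul, smul_smul, add_mul, one_mul, Complex.exp_add, ofReal_exp,
      mul_comm s (cexp (s * u)), add_comm]
  rw [mellinConvergent_iff_integrable_comp_exp] at hs hs'
  have hsmul : Integrable fun u : ℝ ↦ s • (cexp (s * u) • f (Real.exp u)) := hs.smul s
  have hzero := integral_eq_zero_of_hasDerivAt_of_integrable hderiv (hsmul.add hs') hs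
  rw [integral_add hsmul hs', integral_smul] at hzero
  rw [mellin_eq_integral_comp_exp, mellin_eq_integral_comp_exp]
  exact eq_neg_of_add_eq_zero_right hzero

lemma mellin_add_two_of_hasDerivAt (hf : ∀ x, 0 < x → HasDerivAt f (f' x) x)
    (hf' : ∀ x, 0 < x → HasDerivAt f' (f'' x) x) (hs : MellinConvergent f s)
    (hs' : MellinConvergent f' (s + 1)) (hs'' : MellinConvergent f'' (s + 2)) :
    mellin f'' (s + 2) = (s * (s + 1)) • mellin f s := by
  have hadd : s + 1 + 1 = s + 2 := by ring
  rw [← hadd] at hs'' ⊢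
  rw [mellin_add_one_of_hasDerivAt hf' hs' hs'', mellin_add_one_of_hasDerivAt hf hs hs',
    smul_neg, neg_neg, smul_smul, mul_comm]

lemma sq_im_le_norm_mul_add_one (s : ℂ) : s.im ^ 2 ≤ ‖s * (s + 1)‖ := by
  have him : |s.im| ≤ ‖s + 1‖ := by simpa using abs_im_le_norm (s + 1)
  rw [norm_mul, ← sq_abs, sq]
  gcongr
  exact abs_im_le_norm s

lemma verticalIntegrable_mellin_of_hasDerivAt {σ : ℝ} (hf : ∀ x, 0 < x → HasDerivAt f (f' x) x)
    (hf' : ∀ x, 0 < x → HasDerivAt f' (f'' x) x) (hσ : MellinConvergent f σ)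
    (hσ' : MellinConvergent f' (σ + 1)) (hσ'' : MellinConvergent f'' (σ + 2)) :
    VerticalIntegrable (mellin f) σ := by
  set A : ℝ := ∫ u : ℝ, Real.exp (σ * u) * ‖f (Real.exp u)‖
  set B : ℝ := ∫ u : ℝ, Real.exp ((σ + 2) * u) * ‖f'' (Real.exp u)‖
  refine (integrable_inv_one_add_sq.const_mul (A + B)).mono'
    (continuous_mellin_vertical hσ).aestronglyMeasurable (ae_of_all _ fun t ↦ ?_)
  set s : ℂ := σ + t * I with hs
  have hsA : ‖mellin f s‖ ≤ A := (norm_mellin_le f s).trans_eq (by simp [A, hs])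
  have hsB : t ^ 2 * ‖mellin f s‖ ≤ B := calc
    t ^ 2 * ‖mellin f s‖ ≤ ‖s * (s + 1)‖ * ‖mellin f s‖ := by
      gcongr
      simpa [hs] using sq_im_le_norm_mul_add_one s
    _ = ‖mellin f'' (s + 2)‖ := by
      rw [← norm_smul, mellin_add_two_of_hasDerivAt hf hf'
        (mellinConvergent_of_re_eq hσ (by simp [hs]))
        (mellinConvergent_of_re_eq hσ' (by simp [hs]))
        (mellinConvergent_of_re_eq hσ'' (by simp [hs]))]
    _ ≤ B := (norm_mellin_le f'' (s + 2)).trans_eq (by simp [B, hs])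
  rw [← div_eq_mul_inv, le_div_iff₀ (by positivity)]
  linarith

end MellinTransform

section IncGamma

variable {ν a x : ℝ}

lemma continuousOn_exp_neg_mul_rpow (b : ℝ) :
    ContinuousOn (fun t : ℝ ↦ Real.exp (-t) * t ^ b) (Ioi 0) :=
  (by fun_prop : Continuous fun t : ℝ ↦ Real.exp (-t)).continuousOn.mul
    (continuousOn_id.rpow_const fun _ ht ↦ Or.inl ht.ne')

lemma integrableOn_exp_neg_mul_rpow_Ioi (b : ℝ) (hx : 0 < x) :
    IntegrableOn (fun t : ℝ ↦ Real.exp (-t) * t ^ b) (Ioi x) :=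
  integrable_of_isBigO_exp_neg one_half_pos
    ((continuousOn_exp_neg_mul_rpow b).mono (Ici_subset_Ioi.mpr hx))
    (Real.Gamma_integrand_isLittleO b).isBigO

lemma incGamma_nonneg (ν : ℝ) (hx : 0 ≤ x) : 0 ≤ incGamma ν x :=
  setIntegral_nonneg measurableSet_Ioi fun _ ht ↦
    mul_nonneg (Real.exp_pos _).le (Real.rpow_nonneg (hx.trans ht.le) _)

lemma hasDerivAt_incGamma (ν : ℝ) (hx : 0 < x) :
    HasDerivAt (incGamma ν) (-(Real.exp (-x) * x ^ (ν - 1))) x := by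
  obtain ⟨c, hc, hcx⟩ := exists_between hx
  have hcont := continuousOn_exp_neg_mul_rpow (ν - 1)
  have hint := integrableOn_exp_neg_mul_rpow_Ioi (ν - 1) hc
  have hprim : HasDerivAt (fun u ↦ ∫ t in c..u, Real.exp (-t) * t ^ (ν - 1))
      (Real.exp (-x) * x ^ (ν - 1)) x :=
    intervalIntegral.integral_hasDerivAt_right
      ((intervalIntegrable_iff_integrableOn_Ioc_of_le hcx.le).mpr
        (hint.mono_set Ioc_subset_Ioi_self))
      (hcont.stronglyMeasurableAtFilter isOpen_Ioi x hx)
      (hcont.continuousAt (Ioi_mem_nhds hx))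
  refine (hprim.const_sub (incGamma ν c)).congr_of_eventuallyEq ?_
  filter_upwards [Ioi_mem_nhds hcx] with u hu
  rw [← intervalIntegral.integral_Ioi_sub_Ioi hint hu.le, incGamma, incGamma, sub_sub_cancel]

lemma exp_neg_mul_rpow_sub_one_le {c t : ℝ} (ν : ℝ) (hx : 0 < x) (hxt : x ≤ t) (ha : 0 ≤ a)
    (hc : 0 ≤ c) :
    Real.exp (-t) * t ^ (ν - 1) ≤
      Real.exp (-(c * x)) * x ^ (-a) * (t ^ (ν + a - 1) * Real.exp (-((1 - c) * t))) := by
  have ht : 0 < t := hx.trans_le hxt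
  have hexp : Real.exp (-t) = Real.exp (-(c * t)) * Real.exp (-((1 - c) * t)) := by
    rw [← Real.exp_add]; ring_nf
  have hpow : t ^ (ν - 1) = t ^ (-a) * t ^ (ν + a - 1) := by
    rw [← Real.rpow_add ht]; ring_nf
  calc Real.exp (-t) * t ^ (ν - 1)
      = Real.exp (-(c * t)) * t ^ (-a) * (t ^ (ν + a - 1) * Real.exp (-((1 - c) * t))) := by
        rw [hexp, hpow]; ring
    _ ≤ _ := by
        gcongr ?_ * ?_ * _
        · exact Real.exp_le_exp.mpr (by gcongr)
        · exact Real.rpow_le_rpow_of_nonpos hx hxt (neg_nonpos.mpr ha)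

lemma incGamma_le {c : ℝ} (hx : 0 < x) (ha : 0 ≤ a) (hνa : 0 < ν + a) (hc₀ : 0 ≤ c) (hc₁ : c < 1) :
    incGamma ν x ≤
      Real.exp (-(c * x)) * x ^ (-a) * ((1 / (1 - c)) ^ (ν + a) * Real.Gamma (ν + a)) := by
  have hsub : Ioi x ⊆ Ioi 0 := Ioi_subset_Ioi hx.le
  have hint : IntegrableOn (fun t : ℝ ↦ t ^ (ν + a - 1) * Real.exp (-((1 - c) * t))) (Ioi 0) := by
    simpa only [Real.rpow_one, neg_mul] using
      integrableOn_rpow_mul_exp_neg_mul_rpow (by linarith : -1 < ν + a - 1) one_pos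
        (sub_pos.mpr hc₁)
  have hnonneg : 0 ≤ᵐ[volume.restrict (Ioi 0)]
      fun t : ℝ ↦ t ^ (ν + a - 1) * Real.exp (-((1 - c) * t)) := by
    filter_upwards [self_mem_ae_restrict measurableSet_Ioi] with t ht
    exact mul_nonneg (Real.rpow_nonneg ht.le _) (Real.exp_pos _).le
  calc incGamma ν x
      ≤ ∫ t in Ioi x,
          Real.exp (-(c * x)) * x ^ (-a) * (t ^ (ν + a - 1) * Real.exp (-((1 - c) * t))) :=
        setIntegral_mono_on (integrableOn_exp_neg_mul_rpow_Ioi _ hx)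
          ((hint.mono_set hsub).const_mul _) measurableSet_Ioi fun t ht ↦
            exp_neg_mul_rpow_sub_one_le ν hx ht.le ha hc₀
    _ = Real.exp (-(c * x)) * x ^ (-a) *
          ∫ t in Ioi x, t ^ (ν + a - 1) * Real.exp (-((1 - c) * t)) := integral_const_mul _ _
    _ ≤ Real.exp (-(c * x)) * x ^ (-a) *
          ∫ t in Ioi 0, t ^ (ν + a - 1) * Real.exp (-((1 - c) * t)) :=
        mul_le_mul_of_nonneg_left (setIntegral_mono_set hint hnonneg hsub.eventuallyLE)
          (by positivity)
    _ = _ := by rw [Real.integral_rpow_mul_exp_neg_mul_Ioi hνa (sub_pos.mpr hc₁)]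

end IncGamma

/-- The function `x ↦ Γ(ν, 2x) eˣ`, whose Mellin transform is `W_ν`. -/
def incGammaExp (ν x : ℝ) : ℝ := incGamma ν (2 * x) * Real.exp x

section IncGammaExp

variable {ν a x : ℝ} {s : ℂ}

lemma Wnu_eq_mellin (ν : ℝ) : Wnu ν = mellin fun x ↦ (incGammaExp ν x : ℂ) := by
  ext s
  simp only [Wnu, mellin, incGammaExp, smul_eq_mul, mul_comm]

lemma incGammaExp_nonneg (ν : ℝ) (hx : 0 ≤ x) : 0 ≤ incGammaExp ν x :=
  mul_nonneg (incGamma_nonneg ν (by positivity)) (Real.exp_pos x).le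

lemma exists_incGammaExp_le (ha : 0 ≤ a) (hνa : 0 < ν + a) :
    ∃ C, 0 ≤ C ∧ ∀ x, 0 < x → incGammaExp ν x ≤ C * (x ^ (-a) * Real.exp (-(1 / 2) * x)) := by
  refine ⟨2 ^ (-a) * ((1 / (1 - 3 / 4)) ^ (ν + a) * Real.Gamma (ν + a)), ?_, fun x hx ↦ ?_⟩
  · exact mul_nonneg (by positivity)
      (mul_nonneg (Real.rpow_nonneg (by norm_num) _) (Real.Gamma_pos_of_pos hνa).le)
  have hexp : Real.exp (-(1 / 2) * x) = Real.exp (-(3 / 4 * (2 * x))) * Real.exp x := by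
    rw [← Real.exp_add]; ring_nf
  calc incGammaExp ν x
      ≤ Real.exp (-(3 / 4 * (2 * x))) * (2 * x) ^ (-a) *
          ((1 / (1 - 3 / 4)) ^ (ν + a) * Real.Gamma (ν + a)) * Real.exp x :=
        mul_le_mul_of_nonneg_right
          (incGamma_le (by positivity) ha hνa (by norm_num) (by norm_num)) (Real.exp_pos x).le
    _ = _ := by
        rw [Real.mul_rpow zero_le_two hx.le, hexp]
        ring

lemma hasDerivAt_incGammaExp (ν : ℝ) (hx : 0 < x) :
    HasDerivAt (incGammaExp ν)
      (incGammaExp ν x - 2 ^ ν * (Real.exp (-x) * x ^ (ν - 1))) x := by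
  have hscale : HasDerivAt (fun x : ℝ ↦ 2 * x) 2 x := by
    simpa using (hasDerivAt_id x).const_mul 2
  refine (((hasDerivAt_incGamma ν (by positivity : 0 < 2 * x)).comp x hscale).mul
    (Real.hasDerivAt_exp x)).congr_deriv ?_
  have hpow : (2 : ℝ) ^ ν = 2 ^ (ν - 1) * 2 := by
    rw [Real.rpow_sub_one two_ne_zero, div_mul_cancel₀ _ two_ne_zero]
  have hexp : Real.exp (-x) = Real.exp (-(2 * x)) * Real.exp x := by
    rw [← Real.exp_add]; ring_nf
  rw [Real.mul_rpow zero_le_two hx.le, hpow, hexp, incGammaExp, Function.comp_apply]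
  ring

lemma hasDerivAt_exp_neg_mul_rpow (b : ℝ) (hx : 0 < x) :
    HasDerivAt (fun x : ℝ ↦ Real.exp (-x) * x ^ b)
      (b * (Real.exp (-x) * x ^ (b - 1)) - Real.exp (-x) * x ^ b) x := by
  refine ((hasDerivAt_neg x).exp.mul (Real.hasDerivAt_rpow_const (Or.inl hx.ne'))).congr_deriv ?_
  ring

lemma hasDerivAt_deriv_incGammaExp (ν : ℝ) (hx : 0 < x) :
    HasDerivAt (fun x ↦ incGammaExp ν x - 2 ^ ν * (Real.exp (-x) * x ^ (ν - 1)))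
      (incGammaExp ν x - 2 ^ ν * (ν - 1) * (Real.exp (-x) * x ^ (ν - 2))) x := by
  refine ((hasDerivAt_incGammaExp ν hx).sub
    ((hasDerivAt_exp_neg_mul_rpow (ν - 1) hx).const_mul (2 ^ ν))).congr_deriv ?_
  rw [show ν - 1 - 1 = ν - 2 by ring]
  ring

lemma continuousOn_incGammaExp (ν : ℝ) :
    ContinuousOn (fun x ↦ (incGammaExp ν x : ℂ)) (Ioi 0) := fun _ hx ↦
  (hasDerivAt_incGammaExp ν hx).ofReal_comp.continuousAt.continuousWithinAt

lemma incGammaExp_isBigO_atTop (ν : ℝ) :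
    (fun x ↦ (incGammaExp ν x : ℂ)) =O[atTop] fun x ↦ Real.exp (-(1 / 2) * x) := by
  have hpos : 0 < ν + |1 - ν| := by linarith [le_abs_self (1 - ν)]
  obtain ⟨C, hC₀, hC⟩ := exists_incGammaExp_le (abs_nonneg (1 - ν)) hpos
  refine .of_bound C ?_
  filter_upwards [eventually_ge_atTop 1] with x hx
  have hx₀ : 0 < x := one_pos.trans_le hx
  rw [Complex.norm_of_nonneg (incGammaExp_nonneg ν hx₀.le), Real.norm_of_nonneg (Real.exp_pos _).le]
  refine (hC x hx₀).trans ?_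
  gcongr
  refine mul_le_of_le_one_left (Real.exp_pos _).le ?_
  exact Real.rpow_le_one_of_one_le_of_nonpos hx (neg_nonpos.mpr (abs_nonneg _))

lemma incGammaExp_isBigO_zero (ha : 0 ≤ a) (hνa : 0 < ν + a) :
    (fun x ↦ (incGammaExp ν x : ℂ)) =O[nhdsWithin 0 (Ioi 0)] fun x ↦ x ^ (-a) := by
  obtain ⟨C, hC₀, hC⟩ := exists_incGammaExp_le ha hνa
  refine .of_bound C ?_
  filter_upwards [self_mem_nhdsWithin] with x hx
  have hx₀ : 0 < x := hx
  rw [Complex.norm_of_nonneg (incGammaExp_nonneg ν hx₀.le),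
    Real.norm_of_nonneg (Real.rpow_nonneg hx₀.le _)]
  refine (hC x hx₀).trans ?_
  gcongr
  refine mul_le_of_le_one_right (by positivity) (Real.exp_le_one_iff.mpr ?_)
  linarith

lemma mellinConvergent_incGammaExp (hs : max 0 (-ν) < s.re) :
    MellinConvergent (fun x ↦ (incGammaExp ν x : ℂ)) s := by
  obtain ⟨a, ha, has⟩ := exists_between hs
  obtain ⟨ha₀, haν⟩ := max_lt_iff.mp ha
  exact mellinConvergent_of_isBigO_rpow_exp one_half_pos
    ((continuousOn_incGammaExp ν).locallyIntegrableOn measurableSet_Ioi)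
    (incGammaExp_isBigO_atTop ν) (incGammaExp_isBigO_zero ha₀.le (by linarith)) has

lemma differentiableAt_Wnu (hs : max 0 (-ν) < s.re) : DifferentiableAt ℂ (Wnu ν) s := by
  obtain ⟨a, ha, has⟩ := exists_between hs
  obtain ⟨ha₀, haν⟩ := max_lt_iff.mp ha
  rw [Wnu_eq_mellin]
  exact mellin_differentiableAt_of_isBigO_rpow_exp one_half_pos
    ((continuousOn_incGammaExp ν).locallyIntegrableOn measurableSet_Ioi)
    (incGammaExp_isBigO_atTop ν) (incGammaExp_isBigO_zero ha₀.le (by linarith)) has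

lemma mellinConvergent_exp_neg_mul_rpow {b : ℝ} (hs : 0 < s.re + b) :
    MellinConvergent (fun x : ℝ ↦ ((Real.exp (-x) * x ^ b : ℝ) : ℂ)) s := by
  have hint : IntegrableOn (fun x : ℝ ↦ (Real.exp (-x) : ℂ) * (x : ℂ) ^ (s + b - 1)) (Ioi 0) :=
    Complex.GammaIntegral_convergent (by simpa using hs)
  refine hint.congr_fun (fun x hx ↦ ?_) measurableSet_Ioi
  have hx₀ : (x : ℂ) ≠ 0 := ofReal_ne_zero.mpr hx.ne'
  simp only [smul_eq_mul]
  rw [add_sub_right_comm, cpow_add _ _ hx₀, ofReal_mul, ofReal_cpow hx.le]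
  ring

lemma mellinConvergent_incGammaExp_sub {b : ℝ} (c : ℝ) (hs : max 0 (-ν) < s.re)
    (hb : 0 < s.re + b) :
    MellinConvergent
      (fun x ↦ ((incGammaExp ν x - c * (Real.exp (-x) * x ^ b) : ℝ) : ℂ)) s := by
  simpa only [ofReal_sub, ofReal_mul c, smul_eq_mul] using
    (hasMellin_sub (mellinConvergent_incGammaExp hs)
      ((mellinConvergent_exp_neg_mul_rpow hb).const_smul (c : ℂ))).1

lemma verticalIntegrable_mellin_incGammaExp {σ : ℝ} (hσ : max 0 (-ν) < σ) :
    VerticalIntegrable (mellin fun x ↦ (incGammaExp ν x : ℂ)) σ := by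
  have hσν : -ν < σ := (le_max_right _ _).trans_lt hσ
  have hre₁ : ((σ : ℂ) + 1).re = σ + 1 := by simp
  have hre₂ : ((σ : ℂ) + 2).re = σ + 2 := by simp
  exact verticalIntegrable_mellin_of_hasDerivAt
    (fun x hx ↦ (hasDerivAt_incGammaExp ν hx).ofReal_comp)
    (fun x hx ↦ (hasDerivAt_deriv_incGammaExp ν hx).ofReal_comp)
    (mellinConvergent_incGammaExp hσ)
    (mellinConvergent_incGammaExp_sub _ (by rw [hre₁]; linarith) (by rw [hre₁]; linarith))
    (mellinConvergent_incGammaExp_sub _ (by rw [hre₂]; linarith) (by rw [hre₂]; linarith))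

end IncGammaExp

theorem Wnu_analytic_and_mellin_inversion_general (ν : ℝ) :
    AnalyticOnNhd ℂ (Wnu ν) {s : ℂ | max 0 (-ν) < s.re} ∧
    ∀ x σ : ℝ, 0 < x → max 0 (-ν) < σ →
      ((incGamma ν (2 * x) * Real.exp x : ℝ) : ℂ) =
        (1 / (2 * Real.pi)) *
          ∫ t : ℝ, (x : ℂ) ^ (-((σ : ℂ) + t * Complex.I)) *
            Wnu ν ((σ : ℂ) + t * Complex.I) := by
  refine ⟨?_, fun x σ hx hσ ↦ ?_⟩
  · exact DifferentiableOn.analyticOnNhd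
      (fun s hs ↦ (differentiableAt_Wnu hs).differentiableWithinAt)
      (isOpen_lt continuous_const continuous_re)
  · have hinv := mellinInv_mellin_eq σ (fun x ↦ (incGammaExp ν x : ℂ)) hx
      (mellinConvergent_incGammaExp hσ) (verticalIntegrable_mellin_incGammaExp hσ)
      ((continuousOn_incGammaExp ν).continuousAt (Ioi_mem_nhds hx))
    rw [← Wnu_eq_mellin, mellinInv, ← Complex.coe_smul] at hinv
    simpa [incGammaExp] using hinv.symm

/-- **Analyticity and Mellin inversion for `W_ν`** (Lemma 4.3): for `ν > 0`,
`W_ν(s)` is analytic on `Re(s) > 0`, and for `x, σ > 0`,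
`Γ(ν,2x) e^x = (1/(2πi)) ∫_{σ-i∞}^{σ+i∞} x^{-s} W_ν(s) ds`. -/
theorem Wnu_analytic_and_mellin_inversion (ν : ℝ) (hν : 0 < ν) :
    AnalyticOnNhd ℂ (Wnu ν) {s : ℂ | 0 < s.re} ∧
    ∀ x σ : ℝ, 0 < x → 0 < σ →
      ((incGamma ν (2 * x) * Real.exp x : ℝ) : ℂ) =
        (1 / (2 * Real.pi)) *
          ∫ t : ℝ, (x : ℂ) ^ (-((σ : ℂ) + t * Complex.I)) *
            Wnu ν ((σ : ℂ) + t * Complex.I) := by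
  simpa only [max_eq_left (neg_nonpos.mpr hν.le)] using
    Wnu_analytic_and_mellin_inversion_general ν
end
end
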